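/- arXiv:1005.0681 — 3 statements merged into one kernel-verified Lean document; each statement's English description precedes it below -/
import Mathlib

section
/- Assume N₂ = ⟨N₀, a₀⟩ for some a₀ ∈ N₂ such that a₀·x̄_j = x̄_{j+1} for every j ∈ ℤ/m (so N₂/N₀ ≅ ℤ/m and N₁ = N₀), and assume the N₀-representation F_{x̄₀} is isotypical (isomorphic to a direct sum of copies of a single irreducible N₀-representation). Then for each equivariant pointwise clutching map ψ ∈ 𝒜, the subset 𝒜_ψ = {ψ′ ∈ 𝒜 : F/ψ′ ≅ F/ψ as N₂-representations} is simply connected (path connected with trivial fundamental group). -/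
/-!
An equivariant clutching map is the same thing as a degree-one operator `Ψ` on `V = ⊕ F j` with
`Ψ ^ m = 1` commuting with `N₂` (`IsCyclicBundle.isClutch_iff`). Let `E` be the algebra of
degree-zero operators commuting with `N₂` (`fiberAlg`).

*Reduction to a conjugacy class.* The averaging operator `∑ i < m, Ψ ^ i` embeds `F/ψ` in `V`.
Taking degree-zero parts of an isomorphism of quotients shows that `F/ψ ≅ F/ψ'` exactly when
`Ψ' = S Ψ S⁻¹` for a unit `S` of `E` (`exists_unit_of_quotIso`, `quotIso_of_unit`).
Restriction to `F 0` identifies `E` with `End_{N₀}(F 0)`, so by Schur's lemma the isotypical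
hypothesis gives matrix units in `E` (`exists_isMatrixUnits`) and every automorphism of `E` is inner
(`IsMatrixUnits.exists_unit_of_algHom`). Applied to conjugation by `Ψ` this yields a factorization
`Ψ = T B` with `T ∈ E`, `T ^ m = 1`, and `B ^ m = 1` commuting with `E` (`exists_factorization`).
Right multiplication by `B` is then a homeomorphism from the conjugacy class of `T` under the units
of `E` onto `𝒜_ψ`.

*The conjugacy class of an element of finite order is simply connected*
(`simplyConnectedSpace_conjOrbit`). The argument works in any finite-dimensional complex algebra and
avoids the homotopy sequence of `GL_k(ℂ)` over the centralizer of `T`. The spectral projections of `T` define a flag, hence a big cell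
of those `g` all of whose leading corners are invertible, and `g` in the big cell factors as lower
unipotent times block upper triangular. Scaling the two kinds of off-diagonal blocks to zero
contracts the image of the big cell in the conjugacy class to `T` (`contraction_mem`,
`contractible_orbitCell`). Translates of this open contractible cell cover the class, and they
intersect in path connected sets, because a complex line through a point of an intersection of
translated big cells leaves it only at countably many points (`isPathConnected_inter`). A space
with such a cover is simply connected (`simplyConnectedSpace_of_cover`).
-/

/-! Setup: a group `N₂` acts on the finite set `x̄ = {x̄_j : j ∈ ℤ/m}`, modelled as a
`MulAction` of `N₂` on `ZMod m`.  An `N₂`-vector bundle `F` over `x̄` is modelled as a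
finite-dimensional complex vector space `V` together with a representation
`ρ : N₂ →* End(V)` and a family of submodules `F j ⊆ V` (the fibers) forming an internal
direct sum decomposition of `V` with `ρ g (F j) = F (g • j)`.  A pointwise preclutching
map, i.e. a family of linear isomorphisms `ψ(x̄_j) : F j → F (j+1)`, is modelled as a
single continuous linear map `Ψ : V → V` restricting to a bijection `F j → F (j+1)` on
each fiber.  For `u ∈ F j`, the iterate `ψ^k u` is then just `Ψ^k u`. -/

noncomputable section
open Function Set

namespace Clutch

variable {m : ℕ} {N₂ : Type*} [Group N₂] [MulAction N₂ (ZMod m)]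
variable {V : Type*} [NormedAddCommGroup V] [NormedSpace ℂ V]

/-- `Ψ` is a pointwise preclutching map with respect to the fibers `F`:
for each `j ∈ ℤ/m` it restricts to a (linear) bijection `F j → F (j+1)`. -/
def IsPreclutch (F : ZMod m → Submodule ℂ V) (Ψ : V →L[ℂ] V) : Prop :=
  ∀ j : ZMod m, Set.BijOn Ψ (F j) (F (j + 1))

/-- `Ψ` is an equivariant pointwise clutching map: it is a pointwise preclutching map
such that (1) `ψ^m = id` on each fiber `F j`, and (2) for every `g ∈ N₂` and `j₁ ∈ ℤ/m`,
writing `j₂ = g⁻¹ • j₁` and `j₃ = g • (j₂ + 1)`, one has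
`ψ^(j₃ - j₁) = g ∘ ψ(x̄_{j₂}) ∘ g⁻¹` on `F j₁` (the exponent `j₃ - j₁ ∈ ℤ/m` is
interpreted via its canonical representative). -/
def IsClutch (ρ : Representation ℂ N₂ V) (F : ZMod m → Submodule ℂ V)
    (Ψ : V →L[ℂ] V) : Prop :=
  IsPreclutch F Ψ ∧
  (∀ j : ZMod m, ∀ u ∈ F j, (Ψ ^ m) u = u) ∧
  (∀ (g : N₂) (j₁ : ZMod m), ∀ u ∈ F j₁,
    (Ψ ^ ((g • (g⁻¹ • j₁ + 1) - j₁ : ZMod m)).val) u = ρ g (Ψ (ρ g⁻¹ u)))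

/-- The subspace of `V` spanned by all vectors `u - ψ(x̄_j) u`, `u ∈ F j`; the quotient
`F/ψ` is `V ⧸ clutchSub F Ψ`. -/
def clutchSub (F : ZMod m → Submodule ℂ V) (Ψ : V →L[ℂ] V) : Submodule ℂ V :=
  Submodule.span ℂ {w : V | ∃ j : ZMod m, ∃ u ∈ F j, w = u - Ψ u}

/-- The quotients `F/ψ` and `F/ψ'` are isomorphic as `N₂`-representations (with respect
to the induced representations, whose action is characterized by commuting with the
quotient maps). -/
def QuotIso (ρ : Representation ℂ N₂ V) (F : ZMod m → Submodule ℂ V)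
    (Ψ Ψ' : V →L[ℂ] V) : Prop :=
  ∃ θ : (V ⧸ clutchSub F Ψ) →ₗ[ℂ] (V ⧸ clutchSub F Ψ'),
    Function.Bijective θ ∧
    ∀ (g : N₂) (v w : V), θ ((clutchSub F Ψ).mkQ v) = (clutchSub F Ψ').mkQ w →
      θ ((clutchSub F Ψ).mkQ (ρ g v)) = (clutchSub F Ψ').mkQ (ρ g w)

end Clutch

open Clutch

section
open Topology

/-! ### Simple connectedness from a cover by simply connected open sets -/

section
open scoped unitInterval

/-- Two paths with the same endpoints inside a simply connected subset are homotopic in the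
ambient space. -/
lemma homotopic_of_mem_simplyConnected {X : Type*} [TopologicalSpace X] {U : Set X}
    (hU : IsSimplyConnected U) {x y : X} (p q : Path x y)
    (hp : ∀ t, p t ∈ U) (hq : ∀ t, q t ∈ U) : p.Homotopic q := by
  have := hU.simplyConnectedSpace
  have hx : x ∈ U := by simpa using hp 0
  have hy : y ∈ U := by simpa using hp 1
  let p' : Path (⟨x, hx⟩ : U) ⟨y, hy⟩ :=
    { toFun := fun t => ⟨p t, hp t⟩
      continuous_toFun := by fun_prop
      source' := by simp
      target' := by simp }
  let q' : Path (⟨x, hx⟩ : U) ⟨y, hy⟩ :=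
    { toFun := fun t => ⟨q t, hq t⟩
      continuous_toFun := by fun_prop
      source' := by simp
      target' := by simp }
  exact (SimplyConnectedSpace.paths_homotopic p' q').map (⟨Subtype.val, continuous_subtype_val⟩ : C(U, X))

/-- A space covered by simply connected open sets containing a common point, with path connected
pairwise intersections, is simply connected. A path `d x` from `x₀` to `x` inside a member of the
cover has a homotopy class depending only on `x`; by connectedness of the interval, `d x` followed by
any path from `x` to `y` is homotopic to `d y`. -/
theorem simplyConnectedSpace_of_cover {X ι : Type*} [TopologicalSpace X] (U : ι → Set X) (x₀ : X)
    (hopen : ∀ i, IsOpen (U i)) (hx₀ : ∀ i, x₀ ∈ U i) (hcov : ∀ x, ∃ i, x ∈ U i)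
    (hsc : ∀ i, IsSimplyConnected (U i)) (hint : ∀ i j, IsPathConnected (U i ∩ U j)) :
    SimplyConnectedSpace X := by
  choose c hc using hcov
  have hd : ∀ x, ∃ d : Path x₀ x, ∀ t, d t ∈ U (c x) := fun x => by
    obtain ⟨d, hd⟩ := (hsc (c x)).isPathConnected.joinedIn x₀ (hx₀ _) x (hc x)
    exact ⟨d, hd⟩
  choose d hd using hd
  -- the class of `d x` is the class of any path from `x₀` to `x` inside any member of the cover
  have key : ∀ x i (p : Path x₀ x), (∀ t, p t ∈ U i) → p.Homotopic (d x) := by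
    intro x i p hp
    obtain ⟨q, hq⟩ := (hint i (c x)).joinedIn x₀ ⟨hx₀ _, hx₀ _⟩ x ⟨by simpa using hp 1, hc x⟩
    exact (homotopic_of_mem_simplyConnected (hsc i) p q hp fun t => (hq t).1).trans
      (homotopic_of_mem_simplyConnected (hsc _) q (d x) (fun t => (hq t).2) (hd x))
  have step : ∀ {x y : X} (i) (p : Path x y), (∀ t, p t ∈ U i) →
      ((d x).trans p).Homotopic (d y) := by
    intro x y i p hp
    obtain ⟨q, hq⟩ := (hsc i).isPathConnected.joinedIn x₀ (hx₀ _) x (by simpa using hp 0)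
    refine Path.Homotopic.trans (Path.Homotopic.hcomp (key x i q hq).symm (.refl p)) (key y i _ ?_)
    intro t
    rw [Path.trans_apply]
    split_ifs
    exacts [hq _, hp _]
  have main : ∀ {x y : X} (p : Path x y), ((d x).trans p).Homotopic (d y) := by
    intro x y p
    let P : I → Prop := fun t =>
      ((d (p 0)).trans (p.subpath 0 t)).Homotopic (d (p t))
    have hstep : ∀ s t, (∃ i, ∀ r ∈ uIcc s t, p r ∈ U i) → P s → P t := by
      rintro s t ⟨i, hi⟩ hs
      have h1 : ((d (p s)).trans (p.subpath s t)).Homotopic (d (p t)) := by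
        refine step i _ fun r => ?_
        have : p.subpath s t r ∈ range (p.subpath s t) := ⟨r, rfl⟩
        rw [Path.range_subpath] at this
        obtain ⟨r', hr', h⟩ := this
        rw [← h]; exact hi _ hr'
      have h2 : ((p.subpath 0 s).trans (p.subpath s t)).Homotopic (p.subpath 0 t) :=
        ⟨Path.Homotopy.subpathTransSubpath p 0 s t⟩
      refine Path.Homotopic.trans (Path.Homotopic.hcomp (.refl _) h2.symm) ?_
      refine Path.Homotopic.trans ?_ h1
      refine Path.Homotopic.trans ?_ (Path.Homotopic.hcomp hs (.refl _))
      exact ⟨(Path.Homotopy.transAssoc _ _ _).symm⟩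
    have hloc : IsLocallyConstant P := by
      rw [IsLocallyConstant.iff_exists_open]
      intro t
      have hn : p ⁻¹' (U (c (p t))) ∈ 𝓝 t :=
        ((hopen _).preimage p.continuous).mem_nhds (hc _)
      obtain ⟨ε, hε, hb⟩ := Metric.mem_nhds_iff.1 hn
      refine ⟨Metric.ball t ε, Metric.isOpen_ball, Metric.mem_ball_self hε, fun s hs => ?_⟩
      have hsub : ∀ r ∈ uIcc s t, p r ∈ U (c (p t)) := by
        intro r hr
        apply hb
        rw [Metric.mem_ball, Subtype.dist_eq, Real.dist_eq] at hs ⊢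
        rcases mem_uIcc.1 hr with ⟨h1, h2⟩ | ⟨h1, h2⟩ <;>
        · rw [← Subtype.coe_le_coe] at h1 h2
          rw [abs_lt] at hs ⊢
          constructor <;> linarith
      exact propext ⟨hstep s t ⟨_, hsub⟩, hstep t s ⟨_, by rwa [uIcc_comm]⟩⟩
    have h0 : P 0 := by
      show ((d (p 0)).trans (p.subpath 0 0)).Homotopic (d (p 0))
      rw [Path.subpath_self]
      exact ⟨Path.Homotopy.transRefl _⟩
    have h1 : P 1 := by
      have := hloc.apply_eq_of_isPreconnected (isPreconnected_univ) (mem_univ 0) (mem_univ 1)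
      exact this ▸ h0
    have h2 : ((d (p 0)).trans (p.subpath 0 1)).Homotopic (d (p 1)) := h1
    rw [Path.subpath_zero_one] at h2
    have aux : ∀ {x' y' : X} (hx : x' = x) (hy : y' = y),
      ((d x').trans (p.cast hx hy)).Homotopic (d y') → ((d x).trans p).Homotopic (d y) := by
      rintro _ _ rfl rfl h; exact h
    exact aux _ _ h2
  rw [simply_connected_iff_paths_homotopic']
  refine ⟨⟨⟨x₀⟩, fun x y => ⟨(d x).symm.trans (d y)⟩⟩, fun {x y} p q => ?_⟩
  have h := (main p).trans (main q).symm
  rw [← Path.Homotopic.Quotient.eq] at h ⊢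
  simp only [Path.Homotopic.Quotient.mk_trans] at h
  have := congrArg (Path.Homotopic.Quotient.trans (Path.Homotopic.Quotient.mk (d x)).symm) h
  simpa [← Path.Homotopic.Quotient.trans_assoc] using this
end

/-! ### Flags of idempotents and the big cell -/

/-- A complete family of `n` orthogonal idempotents `P 0, …, P (n - 1)` (some possibly zero), which
endows `E` with a decomposition into `n × n` blocks `P i * E * P j`. -/
structure IsFlag {E : Type*} [Ring E] (n : ℕ) (P : ℕ → E) : Prop where
  idem : ∀ i, P i * P i = P i
  ortho : ∀ i j, i ≠ j → P i * P j = 0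
  complete : ∑ i ∈ Finset.range n, P i = 1

/-- The idempotent `e_i = P 0 + ⋯ + P (i - 1)` onto the `i`-th step of the flag. -/
def flagSum {E : Type*} [Ring E] (P : ℕ → E) (i : ℕ) : E := ∑ j ∈ Finset.range i, P j

/-- The element `e_i g e_i + (1 - e_i)`, which is invertible exactly when the leading `i × i` block
corner of `g` is. -/
def corner {E : Type*} [Ring E] (P : ℕ → E) (i : ℕ) (g : E) : E :=
  flagSum P i * g * flagSum P i + (1 - flagSum P i)

/-- The elements all of whose leading corners are invertible; the case `i = n` says that the element
itself is invertible. -/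
def bigCell {E : Type*} [Ring E] (n : ℕ) (P : ℕ → E) : Set E :=
  {g | ∀ i ≤ n, IsUnit (corner P i g)}

/-- Multiplication of the `(i, j)` block of `X` by the scalar `a i j`. -/
def blockScale {E : Type*} [Ring E] [Algebra ℂ E] (n : ℕ) (P : ℕ → E) (a : ℕ → ℕ → ℂ) (X : E) : E :=
  ∑ i ∈ Finset.range n, ∑ j ∈ Finset.range n, a i j • (P i * X * P j)

/-- For `g` in the big cell, the idempotent `q_i` with the image of `g e_i` and the kernel of `e_i`. -/
noncomputable def cellProj {E : Type*} [Ring E] (P : ℕ → E) (i : ℕ) (g : E) : E :=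
  g * flagSum P i * Ring.inverse (corner P i g)

/-- The lower unipotent factor `u` of an element `g` of the big cell, for which `u⁻¹ g` is block upper
triangular. It maps the image of `P i` by `q_{i+1} - q_i`. -/
noncomputable def cellUnip {E : Type*} [Ring E] (n : ℕ) (P : ℕ → E) (g : E) : E :=
  ∑ i ∈ Finset.range n, (cellProj P (i + 1) g - cellProj P i g) * P i

/-- Block lower triangular with identity diagonal blocks. -/
def IsLowerUnip {E : Type*} [Ring E] (n : ℕ) (P : ℕ → E) (X : E) : Prop :=
  (∀ i < n, ∀ j < n, i < j → P i * X * P j = 0) ∧ ∀ i < n, P i * X * P i = P i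

section
variable {E : Type*} [Ring E] {n : ℕ} {P : ℕ → E}

lemma flagSum_succ (i : ℕ) : flagSum P (i + 1) = flagSum P i + P i := by
  simp [flagSum, Finset.sum_range_succ]

namespace IsFlag
variable (h : IsFlag n P)
include h

lemma sum_eq_one : flagSum P n = 1 := h.complete

lemma mul_flagSum_of_lt {i j : ℕ} (hij : i < j) : P i * flagSum P j = P i := by
  rw [flagSum, Finset.mul_sum, Finset.sum_eq_single i]
  · exact h.idem i
  · intro b _ hb; exact h.ortho i b hb.symm
  · simp [hij]

lemma flagSum_mul_of_lt {i j : ℕ} (hij : i < j) : flagSum P j * P i = P i := by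
  rw [flagSum, Finset.sum_mul, Finset.sum_eq_single i]
  · exact h.idem i
  · intro b _ hb; exact h.ortho b i hb
  · simp [hij]

lemma mul_flagSum_of_le {i j : ℕ} (hij : j ≤ i) : P i * flagSum P j = 0 := by
  rw [flagSum, Finset.mul_sum]
  refine Finset.sum_eq_zero fun b hb => h.ortho i b ?_
  have := Finset.mem_range.1 hb
  omega

lemma flagSum_mul_of_le {i j : ℕ} (hij : j ≤ i) : flagSum P j * P i = 0 := by
  rw [flagSum, Finset.sum_mul]
  refine Finset.sum_eq_zero fun b hb => h.ortho b i ?_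
  have := Finset.mem_range.1 hb
  omega

lemma flagSum_mul_le {i j : ℕ} (hij : i ≤ j) : flagSum P i * flagSum P j = flagSum P i := by
  conv_lhs => rw [flagSum, Finset.sum_mul]
  rw [flagSum]
  refine Finset.sum_congr rfl fun b hb => h.mul_flagSum_of_lt ?_
  have := Finset.mem_range.1 hb
  omega

lemma flagSum_mul_ge {i j : ℕ} (hij : i ≤ j) : flagSum P j * flagSum P i = flagSum P i := by
  conv_lhs => rw [flagSum.eq_1 P i, Finset.mul_sum]
  rw [flagSum]
  refine Finset.sum_congr rfl fun b hb => h.flagSum_mul_of_lt ?_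
  have := Finset.mem_range.1 hb
  omega

lemma flagSum_idem (i : ℕ) : flagSum P i * flagSum P i = flagSum P i := h.flagSum_mul_le le_rfl

lemma eq_sum_blocks (X : E) :
    X = ∑ i ∈ Finset.range n, ∑ j ∈ Finset.range n, P i * X * P j := by
  simp_rw [← Finset.mul_sum, ← Finset.sum_mul, h.complete, one_mul, mul_one]

lemma ext_blocks {X Y : E} (hXY : ∀ i < n, ∀ j < n, P i * X * P j = P i * Y * P j) : X = Y := by
  rw [h.eq_sum_blocks X, h.eq_sum_blocks Y]
  exact Finset.sum_congr rfl fun i hi => Finset.sum_congr rfl fun j hj =>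
    hXY i (Finset.mem_range.1 hi) j (Finset.mem_range.1 hj)

lemma corner_one (i : ℕ) : corner P i 1 = 1 := by
  simp [corner, h.flagSum_idem]

lemma corner_top (g : E) : corner P n g = g := by
  simp [corner, h.sum_eq_one]

lemma flagSum_mul_corner (i : ℕ) (g : E) :
    flagSum P i * corner P i g = flagSum P i * g * flagSum P i := by
  simp only [corner, mul_add, mul_sub, ← mul_assoc, h.flagSum_idem]
  simp

lemma corner_mul_flagSum (i : ℕ) (g : E) :
    corner P i g * flagSum P i = flagSum P i * g * flagSum P i := by
  simp only [corner, add_mul, sub_mul, mul_assoc, h.flagSum_idem]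
  simp

lemma corner_mul_of_upper {i : ℕ} (g : E) {k : E}
    (hk : k * flagSum P i = flagSum P i * k * flagSum P i) :
    corner P i (g * k) = corner P i g * corner P i k := by
  have h1 : corner P i g * (1 - flagSum P i) = 1 - flagSum P i := by
    rw [mul_sub, h.corner_mul_flagSum]; simp [corner]
  rw [corner.eq_1 P i k, mul_add, h1, mul_assoc (flagSum P i) k, ← mul_assoc (corner P i g),
    h.corner_mul_flagSum, corner]
  simp only [mul_assoc] at hk ⊢
  rw [hk, ← mul_assoc (flagSum P i) (flagSum P i), h.flagSum_idem]

lemma corner_mul_of_lower {i : ℕ} {g : E} (k : E)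
    (hg : flagSum P i * g = flagSum P i * g * flagSum P i) :
    corner P i (g * k) = corner P i g * corner P i k := by
  have h1 : (1 - flagSum P i) * corner P i k = 1 - flagSum P i := by
    rw [sub_mul, h.flagSum_mul_corner]; simp [corner]
  rw [corner.eq_1 P i g, add_mul, h1, mul_assoc _ (flagSum P i) (corner P i k),
    h.flagSum_mul_corner, corner]
  rw [← mul_assoc, hg]
  simp only [← mul_assoc]
  rw [mul_assoc _ (flagSum P i) (flagSum P i), h.flagSum_idem]

lemma isUnit_corner_of_upper {i : ℕ} (k : Eˣ)
    (hk : (k : E) * flagSum P i = flagSum P i * k * flagSum P i)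
    (hk' : (↑k⁻¹ : E) * flagSum P i = flagSum P i * ↑k⁻¹ * flagSum P i) :
    IsUnit (corner P i (k : E)) := by
  refine ⟨⟨corner P i k, corner P i ↑k⁻¹, ?_, ?_⟩, rfl⟩
  · rw [← h.corner_mul_of_upper _ hk', k.mul_inv, h.corner_one]
  · rw [← h.corner_mul_of_upper _ hk, k.inv_mul, h.corner_one]

lemma isUnit_of_mem {g : E} (hg : g ∈ bigCell n P) : IsUnit g := by
  simpa [h.corner_top] using hg n le_rfl

omit h in
lemma cellProj_eq {i : ℕ} {g : E} {v : Eˣ} (hv : (v : E) = corner P i g) :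
    cellProj P i g = g * flagSum P i * ↑v⁻¹ := by
  rw [cellProj, ← hv, Ring.inverse_unit]

lemma inv_comm {i : ℕ} {g : E} {v : Eˣ} (hv : (v : E) = corner P i g) :
    (↑v⁻¹ : E) * flagSum P i = flagSum P i * ↑v⁻¹ := by
  have : Commute (v : E) (flagSum P i) := by
    rw [hv]; exact (h.corner_mul_flagSum i g).trans (h.flagSum_mul_corner i g).symm
  exact this.units_inv_left.eq

lemma cellProj_mul_flagSum {i : ℕ} {g : E} (hi : i ≤ n) (hg : g ∈ bigCell n P) :
    cellProj P i g * flagSum P i = cellProj P i g := by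
  obtain ⟨v, hv⟩ := hg i hi
  rw [cellProj_eq hv, mul_assoc _ (↑v⁻¹ : E), h.inv_comm hv, ← mul_assoc, mul_assoc g,
    h.flagSum_idem]

lemma flagSum_mul_cellProj {i : ℕ} {g : E} (hi : i ≤ n) (hg : g ∈ bigCell n P) :
    flagSum P i * cellProj P i g = flagSum P i := by
  obtain ⟨v, hv⟩ := hg i hi
  rw [cellProj_eq hv, ← mul_assoc, ← mul_assoc, ← h.flagSum_mul_corner, ← hv, mul_assoc,
    v.mul_inv, mul_one]

lemma cellProj_mul_mul_flagSum {i j : ℕ} {g : E} (hij : i ≤ j) (hj : j ≤ n)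
    (hg : g ∈ bigCell n P) : cellProj P j g * (g * flagSum P i) = g * flagSum P i := by
  obtain ⟨v, hv⟩ := hg j hj
  rw [cellProj_eq hv, ← h.flagSum_mul_ge hij]
  have : flagSum P j * ↑v⁻¹ * (g * flagSum P j) = flagSum P j := by
    rw [← h.inv_comm hv, mul_assoc, ← mul_assoc (flagSum P j) g, ← h.corner_mul_flagSum, ← hv,
      ← mul_assoc, v.inv_mul, one_mul]
  calc g * flagSum P j * ↑v⁻¹ * (g * (flagSum P j * flagSum P i))
      = g * (flagSum P j * ↑v⁻¹ * (g * flagSum P j)) * flagSum P i := by simp only [mul_assoc]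
    _ = _ := by rw [this, mul_assoc]

lemma cellProj_mul_cellProj {i j : ℕ} {g : E} (hij : i ≤ j) (hj : j ≤ n)
    (hg : g ∈ bigCell n P) : cellProj P j g * cellProj P i g = cellProj P i g := by
  obtain ⟨v, hv⟩ := hg i (hij.trans hj)
  rw [cellProj_eq hv, ← mul_assoc, h.cellProj_mul_mul_flagSum hij hj hg]

lemma flagSum_mul_cellProj_le {i j : ℕ} {g : E} (hij : i ≤ j) (hj : j ≤ n)
    (hg : g ∈ bigCell n P) : flagSum P i * cellProj P j g = flagSum P i := by
  rw [← h.flagSum_mul_le hij, mul_assoc, h.flagSum_mul_cellProj hj hg]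

lemma cellProj_mul_cellProj' {i j : ℕ} {g : E} (hij : i ≤ j) (hj : j ≤ n)
    (hg : g ∈ bigCell n P) : cellProj P i g * cellProj P j g = cellProj P i g := by
  rw [← h.cellProj_mul_flagSum (hij.trans hj) hg, mul_assoc, h.flagSum_mul_cellProj_le hij hj hg]

lemma cellUnip_mul_P {i : ℕ} {g : E} (hi : i < n) :
    cellUnip n P g * P i = (cellProj P (i + 1) g - cellProj P i g) * P i := by
  rw [cellUnip, Finset.sum_mul, Finset.sum_eq_single i]
  · rw [mul_assoc, h.idem]
  · intro b _ hb; rw [mul_assoc, h.ortho b i hb, mul_zero]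
  · simp [hi]

/-- The factor `u` of `g` intertwines the flag idempotent `e_i` with `q_i`, so that `u` and `g` send the
image of `e_i` to the same subspace. -/
lemma cellUnip_mul_flagSum {i : ℕ} {g : E} (hi : i ≤ n) (hg : g ∈ bigCell n P) :
    cellUnip n P g * flagSum P i = cellProj P i g * cellUnip n P g := by
  have key : ∀ j < n, cellUnip n P g * flagSum P i * P j
      = cellProj P i g * cellUnip n P g * P j := by
    intro j hj
    rw [mul_assoc (cellProj P i g), h.cellUnip_mul_P hj, ← mul_assoc, mul_sub]
    rcases lt_or_ge j i with hji | hji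
    · rw [mul_assoc, h.flagSum_mul_of_lt hji, h.cellUnip_mul_P hj,
        h.cellProj_mul_cellProj hji hi hg, h.cellProj_mul_cellProj hji.le hi hg]
    · rw [mul_assoc, h.flagSum_mul_of_le hji, mul_zero,
        h.cellProj_mul_cellProj' (by omega) (by omega) hg, h.cellProj_mul_cellProj' hji hj.le hg,
        sub_self, zero_mul]
  refine h.ext_blocks fun k hk j hj => ?_
  rw [mul_assoc, key j hj, ← mul_assoc]

lemma isLowerUnip_cellUnip {g : E} (hg : g ∈ bigCell n P) : IsLowerUnip n P (cellUnip n P g) := by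
  have a : ∀ i < n, cellProj P i g * P i = 0 := fun i hi => by
    rw [← h.cellProj_mul_flagSum hi.le hg, mul_assoc, h.flagSum_mul_of_le le_rfl, mul_zero]
  have b : ∀ i k, i < k → k ≤ n → P i * cellProj P k g = P i := fun i k hik hk => by
    rw [← h.mul_flagSum_of_lt hik, mul_assoc, h.flagSum_mul_cellProj hk hg]
  constructor
  · intro i hi j hj hij
    rw [mul_assoc, h.cellUnip_mul_P hj, sub_mul, a j hj, sub_zero, ← mul_assoc,
      b i _ (by omega) (by omega), h.ortho i j hij.ne]
  · intro i hi
    rw [mul_assoc, h.cellUnip_mul_P hi, sub_mul, a i hi, sub_zero, ← mul_assoc,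
      b i _ (by omega) (by omega), h.idem]

lemma IsLowerUnip_lower {X : E} (hX : IsLowerUnip n P X) (i : ℕ) :
    flagSum P i * X = flagSum P i * X * flagSum P i := by
  refine h.ext_blocks fun k hk l hl => ?_
  rcases lt_or_ge l i with hl' | hl'
  · simp only [mul_assoc]; rw [h.flagSum_mul_of_lt hl']
  · rw [mul_assoc (P k) _ (P l), mul_assoc (P k) _ (P l), mul_assoc _ (flagSum P i) (P l), h.flagSum_mul_of_le hl', mul_zero, mul_zero,
      ← mul_assoc, ← mul_assoc]
    rcases lt_or_ge k i with hk' | hk'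
    · rw [h.mul_flagSum_of_lt hk', hX.1 k hk l hl (by omega)]
    · rw [h.mul_flagSum_of_le hk']; simp

lemma isLowerUnip_corner {X : E} (hX : IsLowerUnip n P X) (i : ℕ) :
    IsLowerUnip n P (corner P i X) := by
  have e : ∀ k l, P k * corner P i X * P l =
      if k < i then (if l < i then P k * X * P l else 0) else P k * P l := by
    intro k l
    have : P k * corner P i X * P l = (P k * flagSum P i) * X * (flagSum P i * P l)
        + (P k - P k * flagSum P i) * P l := by
      rw [corner]; noncomm_ring
    rw [this]
    split_ifs with h1 h2
    · rw [h.mul_flagSum_of_lt h1, h.flagSum_mul_of_lt h2]; simp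
    · rw [h.mul_flagSum_of_lt h1, h.flagSum_mul_of_le (not_lt.1 h2)]; simp
    · rw [h.mul_flagSum_of_le (not_lt.1 h1)]; simp
  constructor
  · intro k hk l hl hkl
    rw [e, hX.1 k hk l hl hkl, h.ortho k l hkl.ne]; simp
  · intro k hk
    rw [e, hX.2 k hk, h.idem]
    split_ifs <;> rfl

end IsFlag

end

/-! ### Triangular factorization and the contraction of the cell -/

section
variable {E : Type*} [Ring E] [Algebra ℂ E] {n : ℕ} {P : ℕ → E}

namespace IsFlag
variable (h : IsFlag n P)
include h

lemma isUnit_of_isLowerUnip [FiniteDimensional ℂ E] {X : E} (hX : IsLowerUnip n P X) :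
    IsUnit X := by
  have hinj : Function.Injective (LinearMap.mulLeft ℂ X) := by
    rw [← LinearMap.ker_eq_bot, LinearMap.ker_eq_bot']
    intro y hy
    have hy : X * y = 0 := hy
    have key : ∀ i < n, P i * y = 0 := by
      intro i
      induction i using Nat.strong_induction_on with
      | _ i ih =>
        intro hi
        have h1 : ∑ j ∈ Finset.range n, P i * X * P j * y = 0 := by
          rw [← Finset.sum_mul, ← Finset.mul_sum, h.complete, mul_one, mul_assoc, hy, mul_zero]
        rw [Finset.sum_eq_single i] at h1
        · rwa [hX.2 i hi] at h1
        · intro j hj hji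
          have hj := Finset.mem_range.1 hj
          rcases lt_or_gt_of_ne hji with hlt | hgt
          · rw [mul_assoc, ih j hlt hj, mul_zero]
          · rw [hX.1 i hi j hj hgt, zero_mul]
        · simp [hi]
    rw [← one_mul y, ← h.complete, Finset.sum_mul]
    exact Finset.sum_eq_zero fun i hi => key i (Finset.mem_range.1 hi)
  have hsurj := LinearMap.surjective_of_injective hinj
  obtain ⟨y, hy⟩ := hsurj 1
  have hy : X * y = 1 := hy
  refine ⟨⟨X, y, hy, hinj ?_⟩, rfl⟩
  show X * (y * X) = X * 1
  rw [← mul_assoc, hy, one_mul, mul_one]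

lemma block_blockScale (a : ℕ → ℕ → ℂ) (X : E) {k l : ℕ} (hk : k < n) (hl : l < n) :
    P k * blockScale n P a X * P l = a k l • (P k * X * P l) := by
  rw [blockScale, Finset.mul_sum, Finset.sum_mul, Finset.sum_eq_single k]
  · rw [Finset.mul_sum, Finset.sum_mul, Finset.sum_eq_single l]
    · rw [mul_smul_comm, smul_mul_assoc, ← mul_assoc, ← mul_assoc, h.idem, mul_assoc _ (P l),
        h.idem]
    · intro j _ hj
      rw [mul_smul_comm, smul_mul_assoc, mul_assoc _ (P _ * X * P _), mul_assoc _ (P j), h.ortho j l hj]; simp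
    · simp [hl]
  · intro i _ hi
    rw [Finset.mul_sum, Finset.sum_mul]
    refine Finset.sum_eq_zero fun j _ => ?_
    rw [mul_smul_comm, smul_mul_assoc, ← mul_assoc, ← mul_assoc, h.ortho k i hi.symm]; simp
  · simp [hk]

lemma blockScale_one (a : ℕ → ℕ → ℂ) (ha : ∀ i j, a i j = 1) (X : E) :
    blockScale n P a X = X := by
  refine h.ext_blocks fun i hi j hj => ?_
  rw [h.block_blockScale a X hi hj, ha, one_smul]

lemma isLowerUnip_blockScale {X : E} (hX : IsLowerUnip n P X) (s : ℂ) :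
    IsLowerUnip n P (blockScale n P (fun i j => s ^ (i - j)) X) := by
  constructor
  · intro i hi j hj hij
    rw [h.block_blockScale _ X hi hj, hX.1 i hi j hj hij, smul_zero]
  · intro i hi
    rw [h.block_blockScale _ X hi hi, hX.2 i hi]; simp

lemma mem_bigCell_of_isLowerUnip [FiniteDimensional ℂ E] {X : E} (hX : IsLowerUnip n P X) :
    X ∈ bigCell n P := fun i _ => h.isUnit_of_isLowerUnip (h.isLowerUnip_corner hX i)

omit [Algebra ℂ E] h in
lemma commute_flagSum {z : E} (hz : ∀ i, Commute z (P i)) (i : ℕ) : Commute z (flagSum P i) :=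
  Commute.sum_right _ _ _ fun j _ => hz j

omit [Algebra ℂ E] in
lemma upper_of_commute {z : E} (hz : ∀ i, Commute z (P i)) (i : ℕ) :
    z * flagSum P i = flagSum P i * z * flagSum P i := by
  rw [← (commute_flagSum hz i).eq, mul_assoc, h.flagSum_idem]

omit [Algebra ℂ E] in
lemma isUnit_corner_of_commute {z : Eˣ} (hz : ∀ i, Commute (z : E) (P i)) (i : ℕ) :
    IsUnit (corner P i (z : E)) :=
  h.isUnit_corner_of_upper z (h.upper_of_commute hz i)
    (h.upper_of_commute (fun i => (hz i).units_inv_left) i)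

omit [Algebra ℂ E] in
lemma mul_mem_bigCell_of_commute {g : E} {z : Eˣ} (hg : g ∈ bigCell n P)
    (hz : ∀ i, Commute (z : E) (P i)) : g * z ∈ bigCell n P := fun i hi => by
  rw [h.corner_mul_of_upper _ (h.upper_of_commute hz i)]
  exact (hg i hi).mul (h.isUnit_corner_of_commute hz i)

omit [Algebra ℂ E] in
lemma cellProj_mul_of_commute {g : E} {z : Eˣ} {i : ℕ} (hi : i ≤ n) (hg : g ∈ bigCell n P)
    (hz : ∀ i, Commute (z : E) (P i)) : cellProj P i (g * z) = cellProj P i g := by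
  obtain ⟨v, hv⟩ := hg i hi
  obtain ⟨w, hw⟩ := h.isUnit_corner_of_commute hz i
  have hvw : ((v * w : Eˣ) : E) = corner P i (g * z) := by
    rw [h.corner_mul_of_upper _ (h.upper_of_commute hz i), Units.val_mul, hv, hw]
  rw [cellProj_eq hvw, cellProj_eq hv, mul_inv_rev, Units.val_mul]
  have h1 : (z : E) * flagSum P i * ↑w⁻¹ = flagSum P i := by
    rw [Units.mul_inv_eq_iff_eq_mul, hw, h.flagSum_mul_corner, ← h.upper_of_commute hz i]
  rw [← mul_assoc, mul_assoc g, mul_assoc g, h1]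

omit [Algebra ℂ E] in
lemma cellUnip_mul_of_commute {g : E} {z : Eˣ} (hg : g ∈ bigCell n P)
    (hz : ∀ i, Commute (z : E) (P i)) : cellUnip n P (g * z) = cellUnip n P g := by
  refine Finset.sum_congr rfl fun i hi => ?_
  have hi := Finset.mem_range.1 hi
  rw [h.cellProj_mul_of_commute hi hg hz, h.cellProj_mul_of_commute hi.le hg hz]

omit [Algebra ℂ E] in
/-- The factor `u⁻¹ g` of an element `g` of the big cell is block upper triangular, and so is its
inverse. -/
lemma upper_factor {g u : Eˣ} (hg : (g : E) ∈ bigCell n P) (hu : (u : E) = cellUnip n P (g : E))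
    {i : ℕ} (hi : i ≤ n) :
    ((u⁻¹ * g : Eˣ) : E) * flagSum P i = flagSum P i * ((u⁻¹ * g : Eˣ) : E) * flagSum P i ∧
    (((u⁻¹ * g)⁻¹ : Eˣ) : E) * flagSum P i
      = flagSum P i * (((u⁻¹ * g)⁻¹ : Eˣ) : E) * flagSum P i := by
  have h1 := h.cellUnip_mul_flagSum hi hg
  rw [← hu] at h1
  constructor
  · have h2 : (↑u⁻¹ : E) * cellProj P i g = flagSum P i * ↑u⁻¹ := by
      rw [Units.inv_mul_eq_iff_eq_mul, ← mul_assoc, h1, mul_assoc, u.mul_inv, mul_one]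
    rw [Units.val_mul, mul_assoc, ← h.cellProj_mul_mul_flagSum le_rfl hi hg, ← mul_assoc, h2]
    simp only [mul_assoc]
  · obtain ⟨v, hv⟩ := hg i hi
    have h2 : (((u⁻¹ * g)⁻¹ : Eˣ) : E) * flagSum P i = flagSum P i * (↑v⁻¹ * u) := by
      rw [mul_inv_rev, inv_inv, Units.val_mul, mul_assoc, h1, cellProj_eq hv]
      simp only [← mul_assoc]
      rw [g.inv_mul, one_mul]
    rw [mul_assoc, h2, ← mul_assoc (flagSum P i) (flagSum P i), h.flagSum_idem]

/-- A conjugate of `T` by a block upper triangular unit is block upper triangular with the same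
diagonal blocks `c k • P k` as `T`. -/
lemma block_upper {b : Eˣ} {T : E} {c : ℕ → ℂ} (hT : ∀ i < n, T * P i = c i • P i)
    (hb : ∀ i ≤ n, (b : E) * flagSum P i = flagSum P i * (b : E) * flagSum P i)
    (hb' : ∀ i ≤ n, (↑b⁻¹ : E) * flagSum P i = flagSum P i * (↑b⁻¹ : E) * flagSum P i) :
    (∀ k < n, ∀ l < n, l < k → P k * (b * T * ↑b⁻¹) * P l = 0) ∧
    ∀ k < n, P k * (b * T * ↑b⁻¹) * P k = c k • P k := by
  have hTe : ∀ i ≤ n, T * flagSum P i = flagSum P i * (T * flagSum P i) := by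
    intro i hi
    rw [flagSum, Finset.mul_sum, Finset.mul_sum]
    refine Finset.sum_congr rfl fun j hj => ?_
    have hj := Finset.mem_range.1 hj
    have := h.flagSum_mul_of_lt hj
    rw [flagSum] at this
    rw [hT j (by omega), mul_smul_comm, this]
  have hPb : ∀ k i, i ≤ k → i ≤ n → P k * ((b : E) * flagSum P i) = 0 := fun k i hik hi => by
    rw [hb i hi, ← mul_assoc, ← mul_assoc, h.mul_flagSum_of_le hik]; simp
  have h1 : ∀ k < n, (↑b⁻¹ : E) * P k = flagSum P (k + 1) * (↑b⁻¹ * P k) := by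
    intro k hk
    conv_lhs => rw [← h.flagSum_mul_of_lt (Nat.lt_succ_self k), ← mul_assoc, hb' (k + 1) hk]
    rw [mul_assoc, h.flagSum_mul_of_lt (Nat.lt_succ_self k), mul_assoc]
  constructor
  · intro k hk l hl hlk
    calc P k * (b * T * ↑b⁻¹) * P l = P k * (b * (T * (↑b⁻¹ * P l))) := by simp only [mul_assoc]
      _ = P k * (b * ((T * flagSum P (l + 1)) * (↑b⁻¹ * P l))) := by rw [mul_assoc T, ← h1 l hl]
      _ = P k * (b * flagSum P (l + 1)) * (T * flagSum P (l + 1) * (↑b⁻¹ * P l)) := by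
          rw [hTe (l + 1) hl]
          simp only [← mul_assoc]
          simp only [mul_assoc _ (flagSum P (l + 1)) (flagSum P (l + 1)), h.flagSum_idem]
      _ = 0 := by rw [hPb k (l + 1) hlk hl, zero_mul]
  · intro k hk
    have h2 : T * flagSum P (k + 1) = flagSum P k * (T * flagSum P k)
        + c k • (flagSum P (k + 1) - flagSum P k) := by
      rw [← hTe k hk.le, flagSum_succ, mul_add, hT k hk]; simp
    calc P k * (b * T * ↑b⁻¹) * P k = P k * (b * (T * (↑b⁻¹ * P k))) := by simp only [mul_assoc]
      _ = P k * (b * ((T * flagSum P (k + 1)) * (↑b⁻¹ * P k))) := by rw [mul_assoc T, ← h1 k hk]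
      _ = (P k * (b * flagSum P k)) * (T * flagSum P k) * (↑b⁻¹ * P k)
          + c k • (P k * (b * (flagSum P (k + 1) * (↑b⁻¹ * P k)))
            - (P k * (b * flagSum P k)) * (↑b⁻¹ * P k)) := by
          rw [h2]
          simp only [add_mul, mul_add, smul_mul_assoc, mul_smul_comm, sub_mul, mul_sub, mul_assoc]
      _ = c k • P k := by
          rw [hPb k k le_rfl hk.le, ← h1 k hk, ← mul_assoc (b : E), b.mul_inv, one_mul, h.idem]; simp

/-- The one-parameter torus `∑ i, s ^ i P i`. Conjugation by its inverse scales the `(i, j)` block by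
`s ^ (j - i)`, which is how block scaling of an upper triangular element becomes a conjugation. -/
lemma exists_torus {s : ℂ} (hs : s ≠ 0) : ∃ z : Eˣ, (∀ i, Commute (z : E) (P i)) ∧
    ∀ i < n, (z : E) * P i = s ^ i • P i ∧ P i * (z : E) = s ^ i • P i := by
  have key : ∀ (a : ℕ → ℂ) i, i < n → (∑ j ∈ Finset.range n, a j • P j) * P i = a i • P i ∧
      P i * (∑ j ∈ Finset.range n, a j • P j) = a i • P i := by
    intro a i hi
    rw [Finset.sum_mul, Finset.mul_sum, Finset.sum_eq_single i, Finset.sum_eq_single i]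
    · simp [h.idem]
    · intro j _ hj; rw [mul_smul_comm, h.ortho i j hj.symm, smul_zero]
    · simp [hi]
    · intro j _ hj; rw [smul_mul_assoc, h.ortho j i hj, smul_zero]
    · simp [hi]
  have hmul : ∀ a b : ℕ → ℂ, (∀ i, a i * b i = 1) →
      (∑ j ∈ Finset.range n, a j • P j) * (∑ j ∈ Finset.range n, b j • P j) = 1 := by
    intro a b hab
    rw [Finset.mul_sum, ← h.complete]
    refine Finset.sum_congr rfl fun i hi => ?_
    rw [mul_smul_comm, (key a i (Finset.mem_range.1 hi)).1, smul_smul, mul_comm, hab, one_smul]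
  refine ⟨⟨∑ j ∈ Finset.range n, s ^ j • P j, ∑ j ∈ Finset.range n, (s ^ j)⁻¹ • P j,
    hmul _ _ fun i => mul_inv_cancel₀ (pow_ne_zero _ hs),
    hmul _ _ fun i => inv_mul_cancel₀ (pow_ne_zero _ hs)⟩, fun i => ?_, fun i hi => key _ i hi⟩
  have hc : ∀ j, Commute (P j) (P i) := fun j => by
    rcases eq_or_ne j i with rfl | hji
    · exact Commute.refl _
    · exact (h.ortho j i hji).trans (h.ortho i j hji.symm).symm
  show Commute (∑ j ∈ Finset.range n, s ^ j • P j) (P i)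
  exact Commute.sum_left _ _ _ fun j _ => (hc j).smul_left (s ^ j)

/-- The contraction of the cell. Write `g T g⁻¹ = u X u⁻¹` with `u` the lower unipotent factor of `g`
and `X` block upper triangular. Scaling the off-diagonal blocks of `u` and of `X` by powers of `s`
produces again a conjugate of `T` by an element of the big cell, and for `s = 0` produces `T`. For
`s ≠ 0` the conjugating element is `u_s z⁻¹ b`, with `z` in the torus and `b = u⁻¹ g`; the exponents
`i - j` and `j - i` are truncated, which is harmless since the corresponding blocks vanish. -/
lemma contraction_mem [FiniteDimensional ℂ E] {T : E} {c : ℕ → ℂ}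
    (hT : ∀ i < n, T * P i = c i • P i) {g u : Eˣ}
    (hg : (g : E) ∈ bigCell n P) (hu : (u : E) = cellUnip n P (g : E)) (s : ℂ) {us : Eˣ}
    (hus : (us : E) = blockScale n P (fun i j => s ^ (i - j)) (u : E)) :
    ∃ g' : Eˣ, (g' : E) ∈ bigCell n P ∧
      us * blockScale n P (fun i j => s ^ (j - i)) (↑u⁻¹ * (g * T * ↑g⁻¹) * u) * ↑us⁻¹
        = g' * T * ↑g'⁻¹ ∧ (s = 0 → us = 1 ∧
      blockScale n P (fun i j => s ^ (j - i)) (↑u⁻¹ * (g * T * ↑g⁻¹) * u) = T) := by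
  set b : Eˣ := u⁻¹ * g with hbdef
  have hbX : (↑u⁻¹ * (g * T * ↑g⁻¹) * u : E) = b * T * ↑b⁻¹ := by
    simp [hbdef, mul_assoc]
  have hb := fun i hi => (h.upper_factor hg hu (i := i) hi).1
  have hb' := fun i hi => (h.upper_factor hg hu (i := i) hi).2
  obtain ⟨hX0, hX1⟩ := h.block_upper hT hb hb'
  have hlow : IsLowerUnip n P (u : E) := by rw [hu]; exact h.isLowerUnip_cellUnip hg
  have hlows : IsLowerUnip n P (us : E) := by rw [hus]; exact h.isLowerUnip_blockScale hlow s
  rw [hbX]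
  rcases eq_or_ne s 0 with rfl | hs
  · have hX : blockScale n P (fun i j => (0 : ℂ) ^ (j - i)) (b * T * ↑b⁻¹ : E) = T := by
      refine h.ext_blocks fun i hi j hj => ?_
      rw [h.block_blockScale _ _ hi hj, mul_assoc (P i) T, hT j hj, mul_smul_comm]
      rcases lt_trichotomy i j with hij | rfl | hij
      · rw [zero_pow (by omega), zero_smul, h.ortho i j hij.ne, smul_zero]
      · rw [hX1 i hi, h.idem]; simp
      · rw [hX0 i hi j hj hij, h.ortho i j hij.ne']; simp
    have hone : us = 1 := by
      apply Units.ext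
      rw [hus]
      refine h.ext_blocks fun i hi j hj => ?_
      rw [h.block_blockScale _ _ hi hj, Units.val_one, mul_one]
      rcases lt_trichotomy i j with hij | rfl | hij
      · rw [hlow.1 i hi j hj hij, h.ortho i j hij.ne, smul_zero]
      · rw [hlow.2 i hi, h.idem]; simp
      · rw [zero_pow (by omega), zero_smul, h.ortho i j hij.ne']
    exact ⟨us, h.mem_bigCell_of_isLowerUnip hlows, by rw [hX], fun _ => ⟨hone, hX⟩⟩
  · obtain ⟨z, hzc, hz⟩ := h.exists_torus hs
    have hX : blockScale n P (fun i j => s ^ (j - i)) (b * T * ↑b⁻¹ : E)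
        = ↑z⁻¹ * (b * T * ↑b⁻¹) * z := by
      rw [← Units.mul_right_inj z, ← mul_assoc, ← mul_assoc, z.mul_inv, one_mul]
      refine h.ext_blocks fun i hi j hj => ?_
      have e2 : P i * (b * T * ↑b⁻¹ * z) * P j = s ^ j • (P i * (b * T * ↑b⁻¹) * P j) := by
        rw [mul_assoc (P i), mul_assoc (b * T * ↑b⁻¹ : E), (hz j hj).1, mul_smul_comm,
          mul_smul_comm, ← mul_assoc]
      rw [← mul_assoc, (hz i hi).2, smul_mul_assoc, smul_mul_assoc, h.block_blockScale _ _ hi hj,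
        e2, smul_smul]
      rcases le_or_gt i j with hij | hij
      · rw [← pow_add]; congr 2; omega
      · rw [hX0 i hi j hj hij]; simp
    refine ⟨us * z⁻¹ * b, fun i hi => ?_, ?_, fun h0 => absurd h0 hs⟩
    · rw [Units.val_mul, h.corner_mul_of_upper _ (hb i hi), Units.val_mul,
        h.corner_mul_of_lower _ (h.IsLowerUnip_lower hlows i)]
      exact ((h.mem_bigCell_of_isLowerUnip hlows i hi).mul
        (h.isUnit_corner_of_commute (fun i => (hzc i).units_inv_left) i)).mul
        (h.isUnit_corner_of_upper b (hb i hi) (hb' i hi))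
    · rw [hX]; simp [mul_assoc]

end IsFlag

/-- A complex line through a unit of a finite-dimensional algebra consists of units except for
countably many parameters, because an element has finite spectrum. -/
lemma countable_not_isUnit_line [FiniteDimensional ℂ E] (a d : E) {l₀ : ℂ}
    (h₀ : IsUnit (a + l₀ • d)) : {l : ℂ | ¬ IsUnit (a + l • d)}.Countable := by
  obtain ⟨v, hv⟩ := h₀
  have hfin : (spectrum ℂ (↑v⁻¹ * d)).Finite := by
    have := Module.End.finite_spectrum (Algebra.lmul ℂ E (↑v⁻¹ * d))
    refine this.subset fun μ hμ hu => hμ ?_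
    have hu' : IsUnit (Algebra.lmul ℂ E (algebraMap ℂ E μ - ↑v⁻¹ * d)) := by
      rw [map_sub, AlgHom.commutes]
      exact hu
    have hb := (Module.End.isUnit_iff _).1 hu'
    obtain ⟨y, hy⟩ := hb.2 1
    have hy : (algebraMap ℂ E μ - ↑v⁻¹ * d) * y = 1 := hy
    refine ⟨⟨_, y, hy, hb.1 ?_⟩, rfl⟩
    show (algebraMap ℂ E μ - ↑v⁻¹ * d) * (y * (algebraMap ℂ E μ - ↑v⁻¹ * d))
      = (algebraMap ℂ E μ - ↑v⁻¹ * d) * 1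
    rw [← mul_assoc, hy, one_mul, mul_one]
  refine ((hfin.image fun μ => l₀ - μ⁻¹).subset fun l hl => ?_).countable
  have hne : l ≠ l₀ := by
    rintro rfl; exact hl ⟨v, hv⟩
  have hne' : l₀ - l ≠ 0 := sub_ne_zero.2 hne.symm
  refine ⟨(l₀ - l)⁻¹, fun hu => hl ?_, by simp⟩
  have e : a + l • d = v * ((l₀ - l) • (algebraMap ℂ E (l₀ - l)⁻¹ - ↑v⁻¹ * d)) := by
    rw [mul_smul_comm, mul_sub, ← mul_assoc, v.mul_inv, one_mul, smul_sub,
      Algebra.algebraMap_eq_smul_one, mul_smul_comm, smul_smul, mul_inv_cancel₀ hne', one_smul,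
      mul_one, hv, sub_smul]
    abel
  rw [e]
  exact v.isUnit.mul (hu.smul (Units.mk0 _ hne'))

end

/-! ### The topology of a conjugacy class -/

section
open scoped unitInterval
variable {E : Type*} [NormedRing E]

/-- The conjugacy class of `T` under the units of `E`. -/
def conjOrbit (T : E) : Set E := {Y | ∃ g : Eˣ, Y = g * T * ↑g⁻¹}

/-- The orbit map `g ↦ g T g⁻¹` onto the conjugacy class. -/
def conjMap (T : E) (g : Eˣ) : conjOrbit T := ⟨g * T * ↑g⁻¹, g, rfl⟩

/-- The set of `g T g⁻¹` with `x g` in the big cell, that is, the translate by `x⁻¹` of the image of the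
big cell in the conjugacy class of `T`. -/
def orbitCell (n : ℕ) (P : ℕ → E) (T : E) (x : Eˣ) : Set (conjOrbit T) :=
  conjMap T '' {g | ((x * g : Eˣ) : E) ∈ bigCell n P}

lemma conjMap_eq_iff {T : E} {g g' : Eˣ} :
    conjMap T g = conjMap T g' ↔ ∃ z : Eˣ, Commute (z : E) T ∧ g' = g * z := by
  constructor
  · intro h
    have h : (g * T * ↑g⁻¹ : E) = g' * T * ↑g'⁻¹ := congrArg Subtype.val h
    refine ⟨g⁻¹ * g', ?_, by simp⟩
    have h2 := congrArg (fun Y => (↑g⁻¹ : E) * Y * g') h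
    simp only [mul_assoc, Units.inv_mul_cancel_left, Units.inv_mul, mul_one] at h2
    show ((g⁻¹ * g' : Eˣ) : E) * T = T * ((g⁻¹ * g' : Eˣ) : E)
    rw [Units.val_mul, h2, mul_assoc]
  · rintro ⟨z, hz, rfl⟩
    apply Subtype.ext
    show (g * T * ↑g⁻¹ : E) = ↑(g * z) * T * ↑(g * z)⁻¹
    rw [mul_inv_rev, Units.val_mul, Units.val_mul, mul_assoc (g : E) z T, hz.eq]
    simp [mul_assoc]

lemma conjMap_surjective (T : E) : Function.Surjective (conjMap T) := by
  rintro ⟨_, g, rfl⟩; exact ⟨g, rfl⟩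

lemma continuous_conjMap (T : E) : Continuous (conjMap T) := by
  refine Continuous.subtype_mk ?_ _
  exact (Units.continuous_val.mul continuous_const).mul
    (Units.continuous_val.comp continuous_inv)

lemma continuous_ringInverse [CompleteSpace E] {X : Type*} [TopologicalSpace X] {f : X → E}
    (hf : Continuous f) (hu : ∀ x, IsUnit (f x)) : Continuous fun x => Ring.inverse (f x) := by
  rw [continuous_iff_continuousAt]
  intro x
  obtain ⟨v, hv⟩ := hu x
  have := NormedRing.inverse_continuousAt v
  rw [hv] at this
  exact ContinuousAt.comp this hf.continuousAt

/-- The orbit map of an element of finite order is open: near `g T g⁻¹` it has the continuous local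
section `Y ↦ m⁻¹ ∑ k, Y ^ k g T ^ (m - k)`, which intertwines `T` with `Y`. -/
lemma isOpenMap_conjMap [CompleteSpace E] [NormedAlgebra ℂ E] {T : E} {m : ℕ} (hm : m ≠ 0)
    (hT : T ^ m = 1) : IsOpenMap (conjMap T) := by
  rw [isOpenMap_iff_nhds_le]
  intro g V hV
  rw [Filter.mem_map] at hV
  let τ : conjOrbit T → E := fun Y =>
    (m : ℂ)⁻¹ • ∑ k ∈ Finset.range m, (Y : E) ^ k * g * T ^ (m - k)
  have hτ : Continuous τ := by
    refine Continuous.const_smul (continuous_finsetSum _ fun k _ => ?_) _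
    fun_prop
  have hτg : τ (conjMap T g) = g := by
    have : ∀ k ∈ Finset.range m, (conjMap T g : E) ^ k * g * T ^ (m - k) = g := by
      intro k hk
      have hk := Finset.mem_range.1 hk
      have e : (conjMap T g : E) ^ k = g * T ^ k * ↑g⁻¹ := Units.conj_pow g T k
      rw [e, mul_assoc _ (↑g⁻¹ : E), g.inv_mul, mul_one, mul_assoc, ← pow_add,
        Nat.add_sub_cancel' hk.le, hT, mul_one]
    simp only [τ]
    rw [Finset.sum_congr rfl this, Finset.sum_const, Finset.card_range, ← Nat.cast_smul_eq_nsmul ℂ,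
      smul_smul, inv_mul_cancel₀ (Nat.cast_ne_zero.2 hm), one_smul]
  have hint : ∀ Y : conjOrbit T, (Y : E) * τ Y = τ Y * T := by
    rintro ⟨Y, hY⟩
    have hYm : Y ^ m = 1 := by
      obtain ⟨k, rfl⟩ := hY
      rw [Units.conj_pow, hT, mul_one, k.mul_inv]
    simp only [τ, mul_smul_comm, smul_mul_assoc]
    congr 1
    rw [Finset.mul_sum, Finset.sum_mul]
    have a1 := Finset.sum_range_succ (fun k => Y ^ k * (g : E) * T ^ (m + 1 - k)) m
    have a2 := Finset.sum_range_succ' (fun k => Y ^ k * (g : E) * T ^ (m + 1 - k)) m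
    have a3 : ∑ k ∈ Finset.range m, Y * (Y ^ k * g * T ^ (m - k))
        = ∑ k ∈ Finset.range m, Y ^ (k + 1) * (g : E) * T ^ (m + 1 - (k + 1)) := by
      refine Finset.sum_congr rfl fun k _ => ?_
      rw [pow_succ', Nat.add_sub_add_right]; simp only [mul_assoc]
    have a4 : ∑ k ∈ Finset.range m, Y ^ k * g * T ^ (m - k) * T
        = ∑ k ∈ Finset.range m, Y ^ k * (g : E) * T ^ (m + 1 - k) := by
      refine Finset.sum_congr rfl fun k hk => ?_
      have hk := Finset.mem_range.1 hk
      rw [mul_assoc, ← pow_succ, Nat.sub_add_comm hk.le]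
    have a5 : Y ^ 0 * (g : E) * T ^ (m + 1 - 0) = Y ^ m * g * T ^ (m + 1 - m) := by
      rw [hYm]; simp [pow_succ, hT]
    rw [a3, a4]
    rw [a1, a5] at a2
    exact (add_right_cancel a2).symm
  have hW : Units.val '' (conjMap T ⁻¹' V) ∈ 𝓝 (g : E) := Units.isOpenEmbedding_val.isOpenMap.image_mem_nhds hV
  rw [← hτg] at hW
  filter_upwards [hτ.continuousAt hW] with Y hY
  obtain ⟨k, hkV, hk⟩ := hY
  have : conjMap T k = Y := by
    apply Subtype.ext
    show (k * T * ↑k⁻¹ : E) = Y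
    rw [Units.mul_inv_eq_iff_eq_mul, hk, hint]
  rw [← this]; exact hkV

variable [NormedAlgebra ℂ E] {n : ℕ} {P : ℕ → E}

omit [NormedAlgebra ℂ E] in
lemma isOpen_bigCell [CompleteSpace E] : IsOpen (bigCell n P) := by
  have : bigCell n P = ⋂ i ∈ Finset.range (n + 1), corner P i ⁻¹' {x | IsUnit x} := by
    ext g; simp [bigCell]
  rw [this]
  refine isOpen_biInter_finset fun i _ => Units.isOpen.preimage ?_
  unfold corner
  fun_prop

lemma countable_notMem_bigCell [FiniteDimensional ℂ E] (a d : E) {l₀ : ℂ}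
    (h₀ : a + l₀ • d ∈ bigCell n P) : {l : ℂ | a + l • d ∉ bigCell n P}.Countable := by
  have e : ∀ i (l : ℂ), corner P i (a + l • d)
      = corner P i a + l • (flagSum P i * d * flagSum P i) := by
    intro i l
    simp only [corner, mul_add, add_mul, mul_smul_comm, smul_mul_assoc]
    abel
  have : {l : ℂ | a + l • d ∉ bigCell n P} ⊆ ⋃ i ∈ Set.Iic n, {l : ℂ | ¬ IsUnit (corner P i a
      + l • (flagSum P i * d * flagSum P i))} := by
    intro l hl
    simp only [bigCell, mem_ofPred_eq, not_forall] at hl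
    obtain ⟨i, hi, h⟩ := hl
    rw [e] at h
    exact mem_biUnion (mem_Iic.2 hi) h
  refine Set.Countable.mono this ((Set.finite_Iic n).countable.biUnion fun i hi => ?_)
  exact countable_not_isUnit_line _ _ (by rw [← e]; exact h₀ i hi)

namespace IsFlag
variable (h : IsFlag n P) {T : E} (hP : ∀ z, Commute z T → ∀ i, Commute z (P i))
include h hP

omit [NormedAlgebra ℂ E] in
lemma conjMap_mem_orbitCell {x g : Eˣ} :
    conjMap T g ∈ orbitCell n P T x ↔ ((x * g : Eˣ) : E) ∈ bigCell n P := by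
  refine ⟨?_, fun hg => ⟨g, hg, rfl⟩⟩
  rintro ⟨g', hg', he⟩
  obtain ⟨z, hz, rfl⟩ := conjMap_eq_iff.1 he
  rw [← mul_assoc, Units.val_mul]
  exact h.mul_mem_bigCell_of_commute hg' (hP _ hz)

lemma isPathConnected_inter [FiniteDimensional ℂ E] [CompleteSpace E] {x y : Eˣ} (hx : (x : E) ∈ bigCell n P)
    (hy : (y : E) ∈ bigCell n P) :
    IsPathConnected (orbitCell n P T x ∩ orbitCell n P T y) := by
  have he : orbitCell n P T x ∩ orbitCell n P T y
      = conjMap T '' {g : Eˣ | (x : E) * g ∈ bigCell n P ∧ (y : E) * g ∈ bigCell n P} := by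
    ext Y
    obtain ⟨g, rfl⟩ := conjMap_surjective T Y
    constructor
    · rintro ⟨h1, h2⟩
      exact ⟨g, ⟨(h.conjMap_mem_orbitCell hP).1 h1, (h.conjMap_mem_orbitCell hP).1 h2⟩, rfl⟩
    · rintro ⟨g', ⟨h1, h2⟩, he⟩
      rw [← he]
      exact ⟨⟨g', h1, rfl⟩, ⟨g', h2, rfl⟩⟩
  rw [he]
  refine IsPathConnected.image ?_ (continuous_conjMap T)
  rw [Units.isOpenEmbedding_val.isInducing.isPathConnected_iff]
  refine ⟨1, ⟨1, by simpa using ⟨hx, hy⟩, rfl⟩, ?_⟩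
  rintro _ ⟨g, ⟨hgx, hgy⟩, rfl⟩
  let S : Set ℂ := {l | (x : E) * 1 + l • ((x : E) * (g - 1)) ∉ bigCell n P} ∪
    {l | (y : E) * 1 + l • ((y : E) * (g - 1)) ∉ bigCell n P}
  have hS : S.Countable :=
    (countable_notMem_bigCell _ _ (l₀ := 0) (by simpa using hx)).union
    (countable_notMem_bigCell _ _ (l₀ := 0) (by simpa using hy))
  have hSc := hS.isPathConnected_compl_of_one_lt_rank (by rw [Complex.rank_real_complex]; norm_num)
  have h0 : (0 : ℂ) ∈ Sᶜ := by
    simp only [S, mem_compl_iff, mem_union, mem_ofPred_eq, not_or, not_not]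
    simpa using ⟨hx, hy⟩
  have h1 : (1 : ℂ) ∈ Sᶜ := by
    simp only [S, mem_compl_iff, mem_union, mem_ofPred_eq, not_or, not_not]
    simpa [mul_sub] using ⟨hgx, hgy⟩
  have hf : Continuous fun l : ℂ => (1 : E) + l • ((g : E) - 1) := by fun_prop
  have := (hSc.joinedIn 0 h0 1 h1).map hf
  simp only [zero_smul, add_zero, one_smul, add_sub_cancel] at this
  refine this.mono ?_
  rintro _ ⟨l, hl, rfl⟩
  simp only [S, mem_compl_iff, mem_union, mem_ofPred_eq, not_or, not_not] at hl
  have e : ∀ w : E, w * 1 + l • (w * (g - 1)) = w * (1 + l • ((g : E) - 1)) := fun w => by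
    rw [mul_add, mul_smul_comm]
  rw [e, e] at hl
  have hu : IsUnit ((1 : E) + l • ((g : E) - 1)) := by
    have := h.isUnit_of_mem hl.1
    rwa [Units.isUnit_units_mul] at this
  exact ⟨hu.unit, hl, rfl⟩

lemma exists_mem_orbitCell [FiniteDimensional ℂ E] (Y : conjOrbit T) :
    ∃ x : Eˣ, (x : E) ∈ bigCell n P ∧ Y ∈ orbitCell n P T x := by
  obtain ⟨g, rfl⟩ := conjMap_surjective T Y
  have hone : (1 : E) ∈ bigCell n P := fun i _ => by rw [h.corner_one]; exact isUnit_one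
  let S : Set ℂ := {l | (↑g⁻¹ : E) + l • ((1 : E) - ↑g⁻¹) ∉ bigCell n P} ∪
    {l | (1 : E) + l • ((g : E) - 1) ∉ bigCell n P}
  have hS : S.Countable :=
    (countable_notMem_bigCell _ _ (l₀ := 1) (by simpa using hone)).union
    (countable_notMem_bigCell _ _ (l₀ := 0) (by simpa using hone))
  obtain ⟨l, hl⟩ := (hS.isPathConnected_compl_of_one_lt_rank
    (by rw [Complex.rank_real_complex]; norm_num)).nonempty
  simp only [S, mem_compl_iff, mem_union, mem_ofPred_eq, not_or, not_not] at hl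
  obtain ⟨x, hx⟩ := h.isUnit_of_mem hl.1
  refine ⟨x, by rw [hx]; exact hl.1, (h.conjMap_mem_orbitCell hP).2 ?_⟩
  rw [Units.val_mul, hx]
  convert hl.2 using 1
  simp [add_mul, sub_mul]

/-- The contraction of `contraction_mem` depends only on `g T g⁻¹`, since the unipotent factor does not
change under `g ↦ g z` with `z` commuting with `T`. It therefore descends along the open quotient map
from the big cell to its image in the conjugacy class. -/
lemma contractible_orbitCell [FiniteDimensional ℂ E] [CompleteSpace E] {m : ℕ} (hm : m ≠ 0)
    (hTm : T ^ m = 1) {c : ℕ → ℂ} (hT : ∀ i < n, T * P i = c i • P i) :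
    ContractibleSpace (orbitCell n P T 1) := by
  set C := orbitCell n P T 1 with hC
  have hmem : ∀ g : conjMap T ⁻¹' C, ((g : Eˣ) : E) ∈ bigCell n P := fun g => by
    simpa using (h.conjMap_mem_orbitCell hP).1 g.2
  let f : conjMap T ⁻¹' C → C := C.restrictPreimage (conjMap T)
  have hf : IsOpenQuotientMap f :=
    ⟨Set.restrictPreimage_surjective C (conjMap_surjective T),
      (continuous_conjMap T).restrictPreimage,
      (isOpenMap_conjMap hm hTm).restrictPreimage C⟩
  have hq' : IsQuotientMap (Prod.map id f : I × (conjMap T ⁻¹' C) → I × C) :=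
    (IsOpenQuotientMap.id.prodMap hf).isQuotientMap
  let fc : C(I × (conjMap T ⁻¹' C), I × C) := ⟨Prod.map id f, hq'.continuous⟩
  have hq : IsQuotientMap fc := hq'
  -- the contracting homotopy
  let U : I → E → E := fun s u => blockScale n P (fun i j => ((s : ℝ) : ℂ) ^ (i - j)) u
  let L : I → E → E := fun s X => blockScale n P (fun i j => ((s : ℝ) : ℂ) ^ (j - i)) X
  let K : I → E → E → E := fun s u Y =>
    U s u * L s (Ring.inverse u * Y * u) * Ring.inverse (U s u)
  have hlow : ∀ g : conjMap T ⁻¹' C, IsLowerUnip n P (cellUnip n P ((g : Eˣ) : E)) :=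
    fun g => h.isLowerUnip_cellUnip (hmem g)
  have hu : ∀ g : conjMap T ⁻¹' C, IsUnit (cellUnip n P ((g : Eˣ) : E)) :=
    fun g => h.isUnit_of_isLowerUnip (hlow g)
  have hU : ∀ s (g : conjMap T ⁻¹' C), IsUnit (U s (cellUnip n P ((g : Eˣ) : E))) :=
    fun s g => h.isUnit_of_isLowerUnip (h.isLowerUnip_blockScale (hlow g) _)
  have hKmem : ∀ s (g : conjMap T ⁻¹' C), ∃ g' : Eˣ, (g' : E) ∈ bigCell n P ∧
      K s (cellUnip n P ((g : Eˣ) : E)) (conjMap T g : E) = g' * T * ↑g'⁻¹ ∧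
      (s = 0 → K s (cellUnip n P ((g : Eˣ) : E)) (conjMap T g : E) = T) := by
    intro s g
    obtain ⟨u, hu⟩ := hu g
    obtain ⟨us, hus⟩ := hU s g
    rw [← hu] at hus
    obtain ⟨g', hg', h1, h2⟩ := h.contraction_mem hT (hmem g) hu ((s : ℝ) : ℂ) hus
    have e : K s (cellUnip n P ((g : Eˣ) : E)) (conjMap T g : E) = us * blockScale n P
        (fun i j => ((s : ℝ) : ℂ) ^ (j - i)) (↑u⁻¹ * (((g : Eˣ) : E) * T * ↑(g : Eˣ)⁻¹) * u) * ↑us⁻¹ := by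
      simp only [K, L]
      rw [← hu, ← hus, Ring.inverse_unit, Ring.inverse_unit]; rfl
    refine ⟨g', hg', e.trans h1, ?_⟩
    rintro rfl
    obtain ⟨h3, h4⟩ := h2 (by simp)
    rw [e, h4, h3]; simp
  have hcu : Continuous fun g : conjMap T ⁻¹' C => cellUnip n P ((g : Eˣ) : E) := by
    have hcq : ∀ i ≤ n, Continuous fun g : conjMap T ⁻¹' C => cellProj P i ((g : Eˣ) : E) := by
      intro i hi
      have hv : Continuous fun g : conjMap T ⁻¹' C => ((g : Eˣ) : E) :=
        Units.continuous_val.comp continuous_subtype_val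
      refine (hv.mul continuous_const).mul (continuous_ringInverse ?_ fun g => hmem g i hi)
      unfold corner; fun_prop
    refine continuous_finsetSum _ fun i hi => ?_
    have hi := Finset.mem_range.1 hi
    exact ((hcq _ hi).sub (hcq _ hi.le)).mul continuous_const
  have hscale : ∀ (a : ℕ → ℕ → ℕ) {X : Type _} [TopologicalSpace X] (s : X → I) (v : X → E),
      Continuous s → Continuous v →
      Continuous fun x => blockScale n P (fun i j => ((s x : ℝ) : ℂ) ^ a i j) (v x) := by
    intro a X _ s v hs hv
    unfold blockScale
    refine continuous_finsetSum _ fun i _ => continuous_finsetSum _ fun j _ => ?_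
    fun_prop
  have hKc : Continuous fun p : I × (conjMap T ⁻¹' C) =>
      K p.1 (cellUnip n P ((p.2 : Eˣ) : E)) (conjMap T p.2 : E) := by
    have hcu2 := hcu.comp (continuous_snd (X := I))
    have hcY : Continuous fun p : I × (conjMap T ⁻¹' C) => (conjMap T p.2 : E) :=
      continuous_subtype_val.comp ((continuous_conjMap T).comp
        (continuous_subtype_val.comp continuous_snd))
    have hUc := hscale (fun i j => i - j) _ _ continuous_fst hcu2
    refine (hUc.mul (hscale (fun i j => j - i) _ _ continuous_fst
      (((continuous_ringInverse hcu2 fun p => hu p.2).mul hcY).mul hcu2))).mul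
      (continuous_ringInverse hUc fun p => hU p.1 p.2)
  have hG1 : ∀ p : I × (conjMap T ⁻¹' C),
      K p.1 (cellUnip n P ((p.2 : Eˣ) : E)) (conjMap T p.2 : E) ∈ conjOrbit T := fun p => by
    obtain ⟨g', -, h1, -⟩ := hKmem p.1 p.2
    exact ⟨g', h1⟩
  have hG2 : ∀ p : I × (conjMap T ⁻¹' C), (⟨_, hG1 p⟩ : conjOrbit T) ∈ C := fun p => by
    obtain ⟨g', h0, h1, -⟩ := hKmem p.1 p.2
    exact ⟨g', by simpa using h0, Subtype.ext h1.symm⟩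
  let G : C(I × (conjMap T ⁻¹' C), C) :=
    ⟨fun p => ⟨⟨_, hG1 p⟩, hG2 p⟩, (hKc.subtype_mk hG1).subtype_mk hG2⟩
  have hG : Function.FactorsThrough G fc := by
    rintro ⟨s, g⟩ ⟨s', g'⟩ he
    obtain ⟨rfl, h2⟩ : s = s' ∧ f g = f g' := Prod.ext_iff.1 he
    have h2 : conjMap T g = conjMap T g' := congrArg Subtype.val h2
    apply Subtype.ext; apply Subtype.ext
    show K s _ _ = K s _ _
    obtain ⟨z, hz, hgz⟩ := conjMap_eq_iff.1 h2
    rw [h2, hgz, Units.val_mul, h.cellUnip_mul_of_commute (hmem g) (hP _ hz)]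
  let H : C(I × C, C) := hq.lift G hG
  have hH : ∀ s g, H (s, f g) = G (s, g) := fun s g =>
    DFunLike.congr_fun (hq.lift_comp G hG) (s, g)
  have hone : conjMap T 1 ∈ C := (h.conjMap_mem_orbitCell hP).2 fun i _ => by
    simp [h.corner_one]
  rw [contractible_iff_id_nullhomotopic]
  refine ⟨⟨conjMap T 1, hone⟩, ContinuousMap.Homotopic.symm ⟨⟨H, ?_, ?_⟩⟩⟩
  · intro Y
    obtain ⟨g, rfl⟩ := hf.surjective Y
    show H (0, f g) = _
    rw [hH]
    apply Subtype.ext; apply Subtype.ext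
    obtain ⟨g', -, -, h2⟩ := hKmem 0 g
    refine (h2 rfl).trans ?_
    simp [conjMap]
  · intro Y
    obtain ⟨g, rfl⟩ := hf.surjective Y
    show H (1, f g) = _
    rw [hH]
    apply Subtype.ext; apply Subtype.ext
    show K 1 _ _ = (conjMap T g : E)
    obtain ⟨u, hu⟩ := hu g
    simp only [K, U, L]
    rw [h.blockScale_one _ (by simp), h.blockScale_one _ (by simp), ← hu, Ring.inverse_unit]
    simp [mul_assoc]

theorem simplyConnectedSpace_conjOrbit [FiniteDimensional ℂ E] [CompleteSpace E] {m : ℕ}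
    (hm : m ≠ 0) (hTm : T ^ m = 1) {c : ℕ → ℂ} (hT : ∀ i < n, T * P i = c i • P i) :
    SimplyConnectedSpace (conjOrbit T) := by
  refine simplyConnectedSpace_of_cover
    (fun x : {x : Eˣ // (x : E) ∈ bigCell n P} => orbitCell n P T (x : Eˣ)) (conjMap T 1)
    (fun x => ?_) (fun x => ?_) (fun Y => ?_) (fun x => ?_) (fun x y => ?_)
  · refine isOpenMap_conjMap hm hTm _ (isOpen_bigCell.preimage ?_)
    exact Units.continuous_val.comp (continuous_const.mul continuous_id)
  · exact (h.conjMap_mem_orbitCell hP).2 (by simpa using x.2)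
  · obtain ⟨x, hx, hY⟩ := h.exists_mem_orbitCell hP Y
    exact ⟨⟨x, hx⟩, hY⟩
  · have := h.contractible_orbitCell hP hm hTm hT
    obtain ⟨x, -⟩ := x
    have hc : ∀ x : Eˣ, Continuous fun Y : conjOrbit T => ((x : E) * Y * ↑x⁻¹ : E) := fun x => by
      fun_prop
    have hmem : ∀ (x : Eˣ) (Y : conjOrbit T), ((x : E) * Y * ↑x⁻¹ : E) ∈ conjOrbit T := by
      rintro x ⟨_, g, rfl⟩
      exact ⟨x * g, by simp [mul_assoc]⟩
    let φ : conjOrbit T ≃ₜ conjOrbit T :=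
      { toFun := fun Y => ⟨_, hmem x Y⟩
        invFun := fun Y => ⟨_, hmem x⁻¹ Y⟩
        left_inv := fun Y => by apply Subtype.ext; simp [mul_assoc]
        right_inv := fun Y => by apply Subtype.ext; simp [mul_assoc]
        continuous_toFun := (hc x).subtype_mk _
        continuous_invFun := (hc x⁻¹).subtype_mk _ }
    have hφ : φ '' orbitCell n P T x = orbitCell n P T 1 := by
      have hφg : ∀ g, φ (conjMap T g) = conjMap T (x * g) := fun g => by
        apply Subtype.ext; simp [φ, conjMap, mul_assoc]
      ext Y
      constructor
      · rintro ⟨_, ⟨g, hg, rfl⟩, rfl⟩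
        exact ⟨x * g, by simpa using hg, (hφg g).symm⟩
      · rintro ⟨g, hg, rfl⟩
        refine ⟨_, ⟨x⁻¹ * g, by simpa using hg, rfl⟩, ?_⟩
        rw [hφg]; simp
    have h1 : IsSimplyConnected (orbitCell n P T 1) := SimplyConnectedSpace.ofContractible _
    rw [← hφ] at h1
    exact (φ.isEmbedding.isSimplyConnected_image).1 h1
  · exact h.isPathConnected_inter hP x.2 y.2

end IsFlag
end

/-! ### Spectral projections of an element of finite order -/

section
variable {E : Type*} [Ring E] [Algebra ℂ E]

/-- The projection onto the `exp (2πi k / m)`-eigenspace of an element `T` with `T ^ m = 1`. -/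
noncomputable def spectralProj (m : ℕ) (T : E) (k : ℕ) : E :=
  (m : ℂ)⁻¹ • ∑ i ∈ Finset.range m, (Complex.exp (2 * Real.pi * Complex.I / m) ^ k)⁻¹ ^ i • T ^ i

lemma commute_spectralProj {m : ℕ} {T z : E} (hz : Commute z T) (k : ℕ) :
    Commute z (spectralProj m T k) :=
  (Commute.sum_right _ _ _ fun i _ => (hz.pow_right i).smul_right _).smul_right _

lemma mul_spectralProj {m : ℕ} (hm : m ≠ 0) {T : E} (hT : T ^ m = 1) (k : ℕ) :
    T * spectralProj m T k
      = Complex.exp (2 * Real.pi * Complex.I / m) ^ k • spectralProj m T k := by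
  set ζ := Complex.exp (2 * Real.pi * Complex.I / m) ^ k with hζ
  have hζ0 : ζ ≠ 0 := pow_ne_zero _ (Complex.exp_ne_zero _)
  have hζm : ζ ^ m = 1 := by
    rw [hζ, ← pow_mul, mul_comm k m, pow_mul, (Complex.isPrimitiveRoot_exp m hm).pow_eq_one, one_pow]
  have hc : ∀ i, ζ • (ζ⁻¹ ^ (i + 1) • T ^ (i + 1)) = T * (ζ⁻¹ ^ i • T ^ i) := fun i => by
    rw [smul_smul, pow_succ', mul_inv_cancel_left₀ hζ0, pow_succ', mul_smul_comm]
  have h1 := Finset.sum_range_succ (fun i => ζ⁻¹ ^ i • T ^ i) m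
  have h2 := Finset.sum_range_succ' (fun i => ζ⁻¹ ^ i • T ^ i) m
  have h3 : ζ⁻¹ ^ m • T ^ m = ζ⁻¹ ^ 0 • T ^ 0 := by rw [inv_pow, hζm, hT]; simp
  rw [h1, h3] at h2
  have h4 := add_right_cancel h2
  unfold spectralProj
  rw [mul_smul_comm, smul_comm, ← hζ]
  congr 1
  nth_rewrite 2 [h4]
  rw [Finset.mul_sum, Finset.smul_sum]
  exact Finset.sum_congr rfl fun i _ => (hc i).symm

lemma pow_mul_spectralProj {m : ℕ} (hm : m ≠ 0) {T : E} (hT : T ^ m = 1) (k i : ℕ) :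
    T ^ i * spectralProj m T k
      = (Complex.exp (2 * Real.pi * Complex.I / m) ^ k) ^ i • spectralProj m T k := by
  induction i with
  | zero => simp
  | succ i ih => rw [pow_succ', mul_assoc, ih, mul_smul_comm, mul_spectralProj hm hT, smul_smul,
      pow_succ]

lemma spectralProj_mul_spectralProj {m : ℕ} (hm : m ≠ 0) {T : E} (hT : T ^ m = 1) (j k : ℕ) :
    spectralProj m T j * spectralProj m T k = ((m : ℂ)⁻¹ * ∑ i ∈ Finset.range m,
      (Complex.exp (2 * Real.pi * Complex.I / m) ^ k *
        (Complex.exp (2 * Real.pi * Complex.I / m) ^ j)⁻¹) ^ i) • spectralProj m T k := by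
  nth_rewrite 1 [spectralProj]
  rw [smul_mul_assoc, Finset.sum_mul, mul_smul, Finset.sum_smul]
  congr 1
  refine Finset.sum_congr rfl fun i _ => ?_
  rw [smul_mul_assoc, pow_mul_spectralProj hm hT, smul_smul, mul_pow, mul_comm]

lemma isFlag_spectralProj {m : ℕ} (hm : m ≠ 0) {T : E} (hT : T ^ m = 1) :
    IsFlag m (fun k => if k < m then spectralProj m T k else 0) := by
  have hprim := Complex.isPrimitiveRoot_exp m hm
  have hm' : (m : ℂ) ≠ 0 := Nat.cast_ne_zero.2 hm
  have hsum : ∀ i < m, i ≠ 0 → ∑ k ∈ Finset.range m,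
      (Complex.exp (2 * Real.pi * Complex.I / m) ^ k)⁻¹ ^ i = 0 := by
    intro i him hi
    set ζ := Complex.exp (2 * Real.pi * Complex.I / m)
    have h1 : ζ ^ i ≠ 1 := hprim.pow_ne_one_of_pos_of_lt hi him
    have h2 : ∀ k, (ζ ^ k)⁻¹ ^ i = ((ζ ^ i)⁻¹) ^ k := fun k => by
      rw [inv_pow, inv_pow, ← pow_mul, ← pow_mul, mul_comm]
    simp only [h2]
    have h3 : ((ζ ^ i)⁻¹) ≠ 1 := fun h => h1 (inv_eq_one.1 h)
    rw [geom_sum_eq h3, inv_pow, ← pow_mul, mul_comm, pow_mul, hprim.pow_eq_one]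
    simp
  have hgeom : ∀ j < m, ∀ k < m, j ≠ k → ∑ i ∈ Finset.range m,
      (Complex.exp (2 * Real.pi * Complex.I / m) ^ k *
        (Complex.exp (2 * Real.pi * Complex.I / m) ^ j)⁻¹) ^ i = 0 := by
    intro j hj k hk hjk
    set ζ := Complex.exp (2 * Real.pi * Complex.I / m)
    have hne : ζ ^ k * (ζ ^ j)⁻¹ ≠ 1 := fun h =>
      hjk (hprim.pow_inj hj hk (mul_inv_eq_one₀ (pow_ne_zero _ (Complex.exp_ne_zero _)) |>.1 h).symm)
    have hp : ∀ l, (ζ ^ l) ^ m = 1 := fun l => by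
      rw [← pow_mul, mul_comm l m, pow_mul, hprim.pow_eq_one, one_pow]
    rw [geom_sum_eq hne, mul_pow, inv_pow, hp, hp]
    simp
  refine ⟨fun i => ?_, fun i j hij => ?_, ?_⟩
  · split_ifs with hi
    · rw [spectralProj_mul_spectralProj hm hT,
        mul_inv_cancel₀ (pow_ne_zero _ (Complex.exp_ne_zero _))]
      simp [hm']
    · simp
  · split_ifs with hi hj
    · rw [spectralProj_mul_spectralProj hm hT, hgeom i hi j hj hij]; simp
    all_goals simp
  · have h1 : ∀ k ∈ Finset.range m, (if k < m then spectralProj m T k else 0)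
        = (m : ℂ)⁻¹ • ∑ i ∈ Finset.range m,
          (Complex.exp (2 * Real.pi * Complex.I / m) ^ k)⁻¹ ^ i • T ^ i :=
      fun k hk => if_pos (Finset.mem_range.1 hk)
    rw [Finset.sum_congr rfl h1, ← Finset.smul_sum, Finset.sum_comm]
    simp only [← Finset.sum_smul]
    rw [Finset.sum_eq_single_of_mem 0 (Finset.mem_range.2 (Nat.pos_of_ne_zero hm))
      fun i hi h0 => by rw [hsum i (Finset.mem_range.1 hi) h0, zero_smul]]
    simp [← Nat.cast_smul_eq_nsmul ℂ, smul_smul, hm']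
end

/-- The conjugacy class of an element of finite order in a finite-dimensional complex algebra is
simply connected. -/
theorem simplyConnectedSpace_conjOrbit {E : Type*} [NormedRing E] [NormedAlgebra ℂ E]
    [FiniteDimensional ℂ E] {m : ℕ} (hm : m ≠ 0) {T : E} (hT : T ^ m = 1) :
    SimplyConnectedSpace (conjOrbit T) := by
  have : CompleteSpace E := FiniteDimensional.complete ℂ E
  refine (isFlag_spectralProj hm hT).simplyConnectedSpace_conjOrbit (fun z hz i => ?_) hm hT
    (c := fun i => Complex.exp (2 * Real.pi * Complex.I / m) ^ i) (fun i hi => ?_)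
  · split_ifs
    exacts [commute_spectralProj hz i, Commute.zero_right z]
  · simp only [if_pos hi]
    exact mul_spectralProj hm hT i

/-! ### Matrix units and inner automorphisms -/

section
variable {E : Type*} [Ring E] [Algebra ℂ E] {ι : Type*} [Fintype ι] [DecidableEq ι]

/-- The elements `ε i j` are matrix units spanning `E`, the spanning being expressed by `schur`. Thus `E`
is a full matrix algebra over `ℂ`, or zero. -/
structure IsMatrixUnits (ε : ι → ι → E) : Prop where
  mul : ∀ i j k l, ε i j * ε k l = if j = k then ε i l else 0
  sum : ∑ i, ε i i = 1
  schur : ∀ X i j, ∃ c : ℂ, ε i i * X * ε j j = c • ε i j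

namespace IsMatrixUnits
variable {ε : ι → ι → E} (h : IsMatrixUnits ε)
include h

lemma exists_coeff (X : E) : ∃ c : ι → ι → ℂ, X = ∑ i, ∑ j, c i j • ε i j := by
  choose c hc using h.schur X
  refine ⟨c, ?_⟩
  simp only [← hc]
  calc X = (∑ i, ε i i) * X * ∑ j, ε j j := by rw [h.sum, one_mul, mul_one]
    _ = _ := by
      simp only [Finset.sum_mul, Finset.mul_sum]
      exact Finset.sum_comm

lemma exists_scalar_of_commute {z : E} (hz : ∀ X, z * X = X * z) : ∃ c : ℂ, z = c • 1 := by
  rcases isEmpty_or_nonempty ι with hι | ⟨⟨o⟩⟩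
  · have h1 : (1 : E) = 0 := by rw [← h.sum]; simp
    exact ⟨1, by rw [← mul_one z, h1]; simp⟩
  · obtain ⟨c, hc⟩ := h.schur z o o
    have hc' : z * ε o o = c • ε o o := by
      rw [← hc, ← hz, mul_assoc, h.mul, if_pos rfl]
    refine ⟨c, ?_⟩
    rw [← h.sum, ← mul_one z, ← h.sum, Finset.mul_sum, Finset.smul_sum]
    refine Finset.sum_congr rfl fun i _ => ?_
    have e : ε i i = ε i o * ε o o * ε o i := by simp [h.mul]
    rw [e, ← mul_assoc, ← mul_assoc, hz, mul_assoc (ε i o) z, hc']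
    simp

/-- The Skolem–Noether theorem for a matrix algebra: every endomorphism `σ` is inner. The
intertwiner is `T = ∑ i, σ (ε i o) y ε o i` with `y = σ (ε o o) ε p o ≠ 0`; it is invertible because
the two-sided ideal generated by a nonzero matrix is everything. -/
lemma exists_unit_of_algHom [FiniteDimensional ℂ E] (σ : E →ₐ[ℂ] E) :
    ∃ T : Eˣ, ∀ X, σ X * T = T * X := by
  have : IsNoetherianRing E := IsNoetherianRing.of_finite ℂ E
  rcases subsingleton_or_nontrivial E with hE | hE
  · exact ⟨1, fun X => Subsingleton.elim _ _⟩
  rcases isEmpty_or_nonempty ι with hι | ⟨⟨o⟩⟩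
  · exact absurd h.sum (by simp)
  have h0 : σ (ε o o) ≠ 0 := by
    intro h0
    have h1 : (1 : E) = 0 := by
      rw [← map_one σ, ← h.sum, map_sum]
      refine Finset.sum_eq_zero fun i _ => ?_
      have e : ε i i = ε i o * ε o o * ε o i := by simp [h.mul]
      rw [e, map_mul, map_mul, h0]; simp
    exact one_ne_zero h1
  obtain ⟨p, hp⟩ : ∃ p, σ (ε o o) * ε p p ≠ 0 := by
    by_contra! hp
    apply h0
    rw [← mul_one (σ (ε o o)), ← h.sum, Finset.mul_sum]
    exact Finset.sum_eq_zero fun i _ => hp i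
  let y := σ (ε o o) * ε p o
  let T := ∑ i, σ (ε i o) * y * ε o i
  have hTε : ∀ j l, σ (ε j l) * T = T * ε j l := by
    intro j l
    simp only [T, Finset.mul_sum, Finset.sum_mul]
    rw [Finset.sum_eq_single_of_mem l (Finset.mem_univ _), Finset.sum_eq_single_of_mem j
      (Finset.mem_univ _)]
    · rw [mul_assoc _ (ε o j), h.mul, if_pos rfl, ← mul_assoc, ← mul_assoc, ← map_mul, h.mul,
        if_pos rfl]
    · intro i _ hi
      rw [mul_assoc, h.mul, if_neg hi, mul_zero]
    · intro i _ hi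
      rw [← mul_assoc, ← mul_assoc, ← map_mul, h.mul, if_neg (Ne.symm hi), map_zero]
      simp
  have hT : ∀ X, σ X * T = T * X := by
    intro X
    obtain ⟨c, rfl⟩ := h.exists_coeff X
    simp only [map_sum, map_smul, Finset.sum_mul, Finset.mul_sum, smul_mul_assoc, mul_smul_comm,
      hTε]
  have hT0 : T ≠ 0 := by
    intro hT0
    have h1 : σ (ε o o) * T * ε o p = σ (ε o o) * ε p p := by
      rw [hTε]
      simp only [T, Finset.sum_mul]
      rw [Finset.sum_eq_single_of_mem o (Finset.mem_univ _)]
      · simp only [y, mul_assoc, h.mul, if_true]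
        rw [← mul_assoc, ← map_mul, h.mul, if_pos rfl]
      · intro i _ hi
        rw [mul_assoc _ (ε o i), h.mul, if_neg hi]; simp
    rw [hT0] at h1
    exact hp (by rw [← h1]; simp)
  obtain ⟨c, hc⟩ := h.exists_coeff T
  obtain ⟨i, j, hij⟩ : ∃ i j, c i j ≠ 0 := by
    by_contra! hij
    exact hT0 (by rw [hc]; simp [hij])
  have hone : (c i j)⁻¹ • ∑ k, ε k i * T * ε j k = 1 := by
    have : ∀ k, ε k i * T * ε j k = c i j • ε k k := by
      intro k
      rw [hc]
      simp only [Finset.mul_sum, Finset.sum_mul, mul_smul_comm, smul_mul_assoc]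
      rw [Finset.sum_eq_single_of_mem i (Finset.mem_univ _),
        Finset.sum_eq_single_of_mem j (Finset.mem_univ _)]
      · simp [h.mul]
      · intro l _ hl; simp [h.mul, hl]
      · intro l _ hl; simp [h.mul, Ne.symm hl]
    simp only [this]
    rw [← Finset.smul_sum, h.sum, smul_smul, inv_mul_cancel₀ hij, one_smul]
  have hleft : ((c i j)⁻¹ • ∑ k, ε k i * σ (ε j k)) * T = 1 := by
    rw [← hone, smul_mul_assoc, Finset.sum_mul]
    simp only [mul_assoc, hT]
  obtain ⟨u, hu⟩ := IsUnit.of_mul_eq_one_right _ hleft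
  exact ⟨u, by rw [hu]; exact hT⟩

end IsMatrixUnits
end

/-! ### Clutching maps as equivariant operators -/

section
lemma exists_proj_of_iSupIndep {ι W : Type*} [DecidableEq ι] [AddCommGroup W] [Module ℂ W]
    {A : ι → Submodule ℂ W} (hA : iSupIndep A) :
    ∃ p : ∀ i, W →ₗ[ℂ] A i, (∀ i, ∀ u : A i, p i u = u) ∧
      ∀ i j, j ≠ i → ∀ u ∈ A j, p i u = 0 := by
  obtain ⟨q, hq⟩ := LinearMap.exists_leftInverse_of_injective
    (DFinsupp.lsum ℕ fun i => (A i).subtype)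
    (LinearMap.ker_eq_bot.2 hA.dfinsupp_lsum_injective)
  have hq' : ∀ j (u : A j), q u = DFinsupp.single j u := fun j u => by
    have := LinearMap.congr_fun hq (DFinsupp.single j u)
    simpa using this
  refine ⟨fun i => DFinsupp.lapply i ∘ₗ q, fun i u => ?_, fun i j hij u hu => ?_⟩
  · simp [hq']
  · have := hq' j ⟨u, hu⟩
    simp only [] at this
    simp [this, hij]

lemma eq_of_mem_iSup {ι W W' : Type*} [AddCommGroup W] [Module ℂ W] [AddCommGroup W']
    [Module ℂ W'] {A : ι → Submodule ℂ W} {f g : W →ₗ[ℂ] W'} {x : W} (hx : x ∈ iSup A)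
    (h : ∀ i, ∀ u ∈ A i, f u = g u) : f x = g x :=
  (iSup_le fun i u hu => h i u hu : iSup A ≤ LinearMap.eqLocus f g) hx

/-- The representation `ρ` of `N₂` on `V` is graded by `ZMod m` with graded pieces `F j` permuted by
`N₂`, and `N₂` is generated by the kernel of the action and an element `a₀` acting as `j ↦ j + 1`. -/
structure IsCyclicBundle {m : ℕ} {N₂ : Type*} [Group N₂] [MulAction N₂ (ZMod m)]
    {V : Type*} [NormedAddCommGroup V] [NormedSpace ℂ V] (ρ : Representation ℂ N₂ V)
    (F : ZMod m → Submodule ℂ V) (a₀ : N₂) : Prop where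
  internal : DirectSum.IsInternal F
  map_eq : ∀ (g : N₂) (j : ZMod m), (F j).map (ρ g) = F (g • j)
  smul_eq : ∀ j : ZMod m, a₀ • j = j + 1
  gen : Subgroup.closure
      (((MulAction.toPermHom N₂ (ZMod m)).ker : Subgroup N₂) ∪ {a₀} : Set N₂) = ⊤

variable {m : ℕ} {N₂ : Type*} [Group N₂] [MulAction N₂ (ZMod m)]
  {V : Type*} [NormedAddCommGroup V] [NormedSpace ℂ V]

/-- The algebra of `N₂`-equivariant operators on `V` preserving each fiber, that is, the endomorphism
algebra of the `N₂`-vector bundle `F`. -/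
def fiberAlg (ρ : Representation ℂ N₂ V) (F : ZMod m → Submodule ℂ V) :
    Subalgebra ℂ (V →L[ℂ] V) where
  carrier := {T | (∀ j, ∀ u ∈ F j, T u ∈ F j) ∧ ∀ g v, T (ρ g v) = ρ g (T v)}
  mul_mem' := by
    rintro S T ⟨hS, hS'⟩ ⟨hT, hT'⟩
    refine ⟨fun j u hu => hS _ _ (hT _ _ hu), fun g v => ?_⟩
    simp [hS', hT']
  add_mem' := by
    rintro S T ⟨hS, hS'⟩ ⟨hT, hT'⟩
    refine ⟨fun j u hu => add_mem (hS _ _ hu) (hT _ _ hu), fun g v => ?_⟩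
    simp [hS', hT']
  algebraMap_mem' := by
    intro c
    simp only [Algebra.algebraMap_eq_smul_one]
    exact ⟨fun j u hu => (F j).smul_mem c hu, fun g v => by simp⟩

lemma smul_eq_of_mem_ker {n : N₂} (hn : n ∈ (MulAction.toPermHom N₂ (ZMod m)).ker)
    (j : ZMod m) : n • j = j := by
  have := DFunLike.congr_fun (MonoidHom.mem_ker.1 hn) j
  simpa using this

lemma rho_inv_apply (ρ : Representation ℂ N₂ V) (g : N₂) (v : V) : ρ g⁻¹ (ρ g v) = v := by
  rw [← Module.End.mul_apply, ← map_mul]; simp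

lemma rho_apply_inv (ρ : Representation ℂ N₂ V) (g : N₂) (v : V) : ρ g (ρ g⁻¹ v) = v := by
  rw [← Module.End.mul_apply, ← map_mul]; simp

omit [MulAction N₂ (ZMod m)] in
lemma fiberAlg_isUnit_of_injective [FiniteDimensional ℂ V] {ρ : Representation ℂ N₂ V}
    {F : ZMod m → Submodule ℂ V} {S : fiberAlg ρ F}
    (hS : Function.Injective (S : V →L[ℂ] V)) : IsUnit S := by
  have : FiniteDimensional ℂ (V →L[ℂ] V) := inferInstance
  have hinj : Function.Injective (LinearMap.mulLeft ℂ S) := by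
    intro X Y hXY
    apply Subtype.ext
    ext v
    apply hS
    exact DFunLike.congr_fun (congrArg Subtype.val hXY) v
  have : IsNoetherianRing (fiberAlg ρ F) := IsNoetherianRing.of_finite ℂ _
  obtain ⟨Y, hY⟩ := LinearMap.injective_iff_surjective.1 hinj 1
  exact IsUnit.of_mul_eq_one Y hY

lemma pow_apply_mem {F : ZMod m → Submodule ℂ V} {Φ : V →L[ℂ] V} (hΦ : ∀ j, ∀ u ∈ F j, Φ u ∈ F (j + 1)) (k : ℕ) {j : ZMod m}
    {u : V} (hu : u ∈ F j) : (Φ ^ k) u ∈ F (j + k) := by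
  induction k with
  | zero => simpa using hu
  | succ k ih =>
    rw [pow_succ', Nat.cast_succ, ← add_assoc]
    exact hΦ _ _ ih

lemma pow_rho_comm {ρ : Representation ℂ N₂ V} {Φ : V →L[ℂ] V} (hΦ : ∀ g v, Φ (ρ g v) = ρ g (Φ v)) (k : ℕ) (g : N₂) (v : V) :
    (Φ ^ k) (ρ g v) = ρ g ((Φ ^ k) v) := by
  induction k with
  | zero => rfl
  | succ k ih => rw [pow_succ', mul_apply_eq_comp, ih, hΦ, mul_apply_eq_comp]

namespace IsCyclicBundle
variable {ρ : Representation ℂ N₂ V} {F : ZMod m → Submodule ℂ V} {a₀ : N₂}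
  (h : IsCyclicBundle ρ F a₀)
include h

lemma rho_mem (g : N₂) {j : ZMod m} {u : V} (hu : u ∈ F j) : ρ g u ∈ F (g • j) := by
  rw [← h.map_eq]; exact Submodule.mem_map_of_mem hu

lemma ext_fibers {W : Type*} [AddCommGroup W] [Module ℂ W] {f g : V →ₗ[ℂ] W}
    (hfg : ∀ j, ∀ u ∈ F j, f u = g u) : f = g := by
  ext v
  exact eq_of_mem_iSup (by rw [h.internal.submodule_iSup_eq_top]; trivial) hfg

lemma induction_gen {p : N₂ → Prop} (hn : ∀ n ∈ (MulAction.toPermHom N₂ (ZMod m)).ker, p n)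
    (ha : p a₀) (hmul : ∀ g g', p g → p g' → p (g * g')) (hinv : ∀ g, p g → p g⁻¹) (g : N₂) :
    p g := by
  have hg : g ∈ Subgroup.closure
      (((MulAction.toPermHom N₂ (ZMod m)).ker : Subgroup N₂) ∪ {a₀} : Set N₂) := by
    rw [h.gen]; trivial
  induction hg using Subgroup.closure_induction with
  | mem x hx =>
    rcases hx with hx | hx
    · exact hn x hx
    · rw [mem_singleton_iff.1 hx]; exact ha
  | one => exact hn 1 (one_mem _)
  | mul x y _ _ hx hy => exact hmul x y hx hy
  | inv x _ hx => exact hinv x hx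

lemma smul_add_one (g : N₂) (j : ZMod m) : g • (j + 1) = g • j + 1 := by
  revert j
  refine h.induction_gen (p := fun g => ∀ j : ZMod m, g • (j + 1) = g • j + 1) ?_ ?_ ?_ ?_ g
  · intro n hn j
    rw [smul_eq_of_mem_ker hn, smul_eq_of_mem_ker hn]
  · intro j; rw [h.smul_eq, h.smul_eq]
  · intro g g' hg hg' j
    rw [mul_smul, hg', hg, mul_smul]
  · intro g hg j
    rw [inv_smul_eq_iff, hg, smul_inv_smul]

/-- Since the action of `N₂` commutes with `j ↦ j + 1`, the exponent in the equivariance condition for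
clutching maps is always `1`, and the condition says that `Ψ` commutes with `ρ`. -/
lemma isClutch_iff (hm : 2 ≤ m) {Ψ : V →L[ℂ] V} :
    IsClutch ρ F Ψ ↔ (∀ j, ∀ u ∈ F j, Ψ u ∈ F (j + 1)) ∧ Ψ ^ m = 1 ∧
      ∀ g v, Ψ (ρ g v) = ρ g (Ψ v) := by
  have hval : ∀ (g : N₂) (j : ZMod m), ((g • (g⁻¹ • j + 1) - j : ZMod m)).val = 1 := by
    intro g j
    rw [h.smul_add_one, smul_inv_smul, add_sub_cancel_left, ZMod.val_one'' (by omega)]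
  constructor
  · rintro ⟨h1, h2, h3⟩
    refine ⟨fun j u hu => (h1 j).mapsTo hu, ?_, fun g v => ?_⟩
    · have := h.ext_fibers (f := ((Ψ ^ m : V →L[ℂ] V) : V →ₗ[ℂ] V))
        (g := ((1 : V →L[ℂ] V) : V →ₗ[ℂ] V)) h2
      exact ContinuousLinearMap.coe_injective this
    · have := h.ext_fibers (f := (Ψ : V →ₗ[ℂ] V) ∘ₗ ρ g) (g := ρ g ∘ₗ Ψ) fun j u hu => by
        have := h3 g _ _ (h.rho_mem g hu)
        rw [hval, pow_one, rho_inv_apply] at this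
        exact this
      exact LinearMap.congr_fun this v
  · rintro ⟨h1, h2, h3⟩
    obtain ⟨k, rfl⟩ : ∃ k, m = k + 1 := ⟨m - 1, by omega⟩
    refine ⟨fun j => ⟨fun u hu => h1 j u hu, ?_, ?_⟩, fun j u _ => by rw [h2]; rfl,
      fun g j u hu => ?_⟩
    · refine Function.Injective.injOn fun u v huv => ?_
      have : ∀ w, (Ψ ^ k) (Ψ w) = w := fun w => by
        rw [← mul_apply_eq_comp, ← pow_succ, h2]; rfl
      rw [← this u, huv, this]
    · intro w hw
      refine ⟨(Ψ ^ k) w, ?_, ?_⟩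
      · have := pow_apply_mem h1 k hw
        have e : j + 1 + (k : ZMod (k + 1)) = j := by
          have : ((k + 1 : ℕ) : ZMod (k + 1)) = 0 := ZMod.natCast_self _
          push_cast at this
          rw [add_assoc, add_comm 1, this, add_zero]
        rwa [e] at this
      · rw [← mul_apply_eq_comp, ← pow_succ', h2]; rfl
    · rw [hval, pow_one, ← h3, rho_apply_inv]

/-! ### Isomorphism of quotients and conjugacy of clutching maps -/

lemma sub_mem_clutchSub (Ψ : V →L[ℂ] V) (v : V) : v - Ψ v ∈ clutchSub F Ψ := by
  have := h.ext_fibers (f := (clutchSub F Ψ).mkQ ∘ₗ (LinearMap.id - (Ψ : V →ₗ[ℂ] V))) (g := 0)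
    fun j u hu => by
      simp only [LinearMap.comp_apply, LinearMap.zero_apply, Submodule.mkQ_apply,
        Submodule.Quotient.mk_eq_zero]
      exact Submodule.subset_span ⟨j, u, hu, rfl⟩
  have := LinearMap.congr_fun this v
  exact (Submodule.Quotient.mk_eq_zero _).1 this

/-- The kernel of the averaging operator `∑ i < m, Ψ ^ i` is the subspace defining `F/ψ`, so this
operator embeds `F/ψ` in `V`. -/
lemma sum_pow_apply_eq_zero_iff [NeZero m] {Ψ : V →L[ℂ] V} (hΨ : Ψ ^ m = 1) (v : V) :
    (∑ i ∈ Finset.range m, Ψ ^ i) v = 0 ↔ v ∈ clutchSub F Ψ := by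
  constructor
  · intro hv
    have hpow : ∀ i, v - (Ψ ^ i) v ∈ clutchSub F Ψ := by
      intro i
      induction i with
      | zero => simp
      | succ i ih =>
        have := add_mem ih (h.sub_mem_clutchSub Ψ ((Ψ ^ i) v))
        rwa [sub_add_sub_cancel, ← mul_apply_eq_comp, ← pow_succ'] at this
    have : (m : ℂ) • v = ∑ i ∈ Finset.range m, (v - (Ψ ^ i) v) := by
      rw [_root_.sum_apply] at hv
      rw [Finset.sum_sub_distrib, hv]
      simp [Nat.cast_smul_eq_nsmul]
    have h1 : (m : ℂ) • v ∈ clutchSub F Ψ := by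
      rw [this]; exact Submodule.sum_mem _ fun i _ => hpow i
    exact (Submodule.smul_mem_iff _ (Nat.cast_ne_zero.2 (NeZero.ne m))).1 h1
  · intro hv
    have : clutchSub F Ψ ≤ LinearMap.ker
        ((∑ i ∈ Finset.range m, Ψ ^ i : V →L[ℂ] V) : V →ₗ[ℂ] V) := by
      refine Submodule.span_le.2 ?_
      rintro _ ⟨j, u, -, rfl⟩
      have e : (∑ i ∈ Finset.range m, Ψ ^ i) * (1 - Ψ) = 0 := by
        rw [geom_sum_mul_neg, hΨ, sub_self]
      exact DFunLike.congr_fun e u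
    exact this hv

/-- Isomorphic quotients come from conjugate clutching maps. An isomorphism `F/ψ ≅ F/ψ'` followed by
the averaging operator of `Ψ'` gives `Θ : V → V` with `Θ Ψ = Θ = Ψ' Θ`, and `S` is its degree-zero
part. If `S` kills `u ∈ F j`, then, `Θ u` being fixed by `Ψ'`, all its components vanish; hence the
averaging operator of `Ψ` kills `u`, and the degree-`j` component of that average is `u` itself. -/
lemma exists_unit_of_quotIso [NeZero m] [FiniteDimensional ℂ V] (hm : 2 ≤ m) {Ψ Ψ' : V →L[ℂ] V}
    (hΨ : IsClutch ρ F Ψ) (hΨ' : IsClutch ρ F Ψ') (hQ : QuotIso ρ F Ψ Ψ') :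
    ∃ S : (fiberAlg ρ F)ˣ, Ψ' * (S : fiberAlg ρ F) = (S : fiberAlg ρ F) * Ψ := by
  obtain ⟨h1, h2, h3⟩ := (h.isClutch_iff hm).1 hΨ
  obtain ⟨h1', h2', h3'⟩ := (h.isClutch_iff hm).1 hΨ'
  obtain ⟨θ, hθ, hθρ⟩ := hQ
  -- the averaging operator of `Ψ'` embeds the quotient in `V`
  let e' : V →ₗ[ℂ] V := ((∑ i ∈ Finset.range m, Ψ' ^ i : V →L[ℂ] V) : V →ₗ[ℂ] V)
  have he' : ∀ v, e' v = 0 ↔ v ∈ clutchSub F Ψ' := h.sum_pow_apply_eq_zero_iff h2'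
  let eb : (V ⧸ clutchSub F Ψ') →ₗ[ℂ] V :=
    (clutchSub F Ψ').liftQ e' fun v hv => (he' v).2 hv
  let Θ : V →ₗ[ℂ] V := eb ∘ₗ θ ∘ₗ (clutchSub F Ψ).mkQ
  have hΘ0 : ∀ v, Θ v = 0 → v ∈ clutchSub F Ψ := by
    intro v hv
    obtain ⟨w, hw⟩ := (clutchSub F Ψ').mkQ_surjective (θ ((clutchSub F Ψ).mkQ v))
    have hv : eb (θ ((clutchSub F Ψ).mkQ v)) = 0 := hv
    rw [← hw] at hv
    have hw0 : (clutchSub F Ψ').mkQ w = 0 := by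
      rw [Submodule.mkQ_apply, Submodule.Quotient.mk_eq_zero]
      exact (he' w).1 hv
    rw [hw0] at hw
    have := hθ.1 (hw.symm.trans (map_zero θ).symm)
    rwa [Submodule.mkQ_apply, Submodule.Quotient.mk_eq_zero] at this
  have hΘΨ : ∀ v, Θ (Ψ v) = Θ v := by
    intro v
    have : (clutchSub F Ψ).mkQ v = (clutchSub F Ψ).mkQ (Ψ v) :=
      (Submodule.Quotient.eq _).2 (h.sub_mem_clutchSub Ψ v)
    simp only [Θ, LinearMap.comp_apply, this]
  have hΨ'Θ : ∀ v, Ψ' (Θ v) = Θ v := by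
    intro v
    obtain ⟨w, hw⟩ := (clutchSub F Ψ').mkQ_surjective (θ ((clutchSub F Ψ).mkQ v))
    have e1 : Θ v = (∑ i ∈ Finset.range m, Ψ' ^ i : V →L[ℂ] V) w := by
      show eb (θ ((clutchSub F Ψ).mkQ v)) = _
      rw [← hw]; rfl
    have e2 : (1 - Ψ') * (∑ i ∈ Finset.range m, Ψ' ^ i) = 0 := by
      rw [mul_neg_geom_sum, h2', sub_self]
    have e3 := DFunLike.congr_fun e2 w
    rw [e1]
    exact (sub_eq_zero.1 e3).symm
  have hΘρ : ∀ g v, Θ (ρ g v) = ρ g (Θ v) := by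
    intro g v
    obtain ⟨w, hw⟩ := (clutchSub F Ψ').mkQ_surjective (θ ((clutchSub F Ψ).mkQ v))
    show eb (θ ((clutchSub F Ψ).mkQ (ρ g v))) = ρ g (eb (θ ((clutchSub F Ψ).mkQ v)))
    rw [hθρ g v w hw.symm, ← hw]
    show (∑ i ∈ Finset.range m, Ψ' ^ i : V →L[ℂ] V) (ρ g w)
      = ρ g ((∑ i ∈ Finset.range m, Ψ' ^ i : V →L[ℂ] V) w)
    simp only [_root_.sum_apply, map_sum, pow_rho_comm h3']
  -- the degree-zero part of `Θ`
  obtain ⟨p, hp, hp0⟩ := exists_proj_of_iSupIndep h.internal.submodule_iSupIndep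
  have hpΨ' : ∀ j v, (p (j + 1) (Ψ' v) : V) = Ψ' (p j v) := by
    intro j v
    refine LinearMap.congr_fun (h.ext_fibers
      (f := (F (j + 1)).subtype ∘ₗ p (j + 1) ∘ₗ (Ψ' : V →ₗ[ℂ] V))
      (g := (Ψ' : V →ₗ[ℂ] V) ∘ₗ (F j).subtype ∘ₗ p j) fun i u hu => ?_) v
    show (p (j + 1) (Ψ' u) : V) = Ψ' (p j u)
    by_cases hij : i = j
    · subst hij
      rw [hp i ⟨u, hu⟩, hp (i + 1) ⟨Ψ' u, h1' _ _ hu⟩]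
    · rw [hp0 _ _ hij u hu, hp0 _ _ (fun e => hij (add_right_cancel e)) _ (h1' _ _ hu)]
      simp
  have hpρ : ∀ g j v, (p (g • j) (ρ g v) : V) = ρ g (p j v) := by
    intro g j v
    refine LinearMap.congr_fun (h.ext_fibers
      (f := (F (g • j)).subtype ∘ₗ p (g • j) ∘ₗ ρ g)
      (g := ρ g ∘ₗ (F j).subtype ∘ₗ p j) fun i u hu => ?_) v
    show (p (g • j) (ρ g u) : V) = ρ g (p j u)
    by_cases hij : i = j
    · subst hij
      rw [hp i ⟨u, hu⟩, hp (g • i) ⟨ρ g u, h.rho_mem g hu⟩]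
    · rw [hp0 _ _ hij u hu, hp0 _ _ (fun e => hij (MulAction.injective g e)) _ (h.rho_mem g hu)]
      simp
  let S₀ : V →ₗ[ℂ] V := ∑ j, (F j).subtype ∘ₗ p j ∘ₗ Θ ∘ₗ (F j).subtype ∘ₗ p j
  have hS₀ : ∀ j, ∀ u ∈ F j, S₀ u = p j (Θ u) := by
    intro j u hu
    simp only [S₀, LinearMap.sum_apply, LinearMap.comp_apply, Submodule.subtype_apply]
    rw [Finset.sum_eq_single_of_mem j (Finset.mem_univ _)]
    · rw [hp j ⟨u, hu⟩]
    · intro i _ hij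
      rw [hp0 i j hij.symm u hu]; simp
  let S : fiberAlg ρ F := ⟨LinearMap.toContinuousLinearMap S₀, fun j u hu => by
      show S₀ u ∈ F j
      rw [hS₀ j u hu]; exact (p j _).2, fun g v => by
      refine LinearMap.congr_fun (h.ext_fibers (f := S₀ ∘ₗ ρ g) (g := ρ g ∘ₗ S₀)
        fun j u hu => ?_) v
      show S₀ (ρ g u) = ρ g (S₀ u)
      rw [hS₀ j u hu, hS₀ _ _ (h.rho_mem g hu), hΘρ, hpρ]⟩
  have hSinj : Function.Injective (S : V →L[ℂ] V) := by
    rw [injective_iff_map_eq_zero]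
    intro v hv
    have hv : S₀ v = 0 := hv
    have hdec : ∀ v : V, v = ∑ j, (p j v : V) := by
      intro v
      have := h.ext_fibers (f := LinearMap.id) (g := ∑ j, (F j).subtype ∘ₗ p j) fun j u hu => by
        simp only [LinearMap.sum_apply, LinearMap.comp_apply, Submodule.subtype_apply]
        rw [Finset.sum_eq_single_of_mem j (Finset.mem_univ _), hp j ⟨u, hu⟩]; · rfl
        intro i _ hij
        rw [hp0 i j hij.symm u hu]; simp
      simpa using LinearMap.congr_fun this v
    have hS₀p : ∀ j, S₀ (p j v : V) = (p j (S₀ v) : V) := by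
      intro j
      refine LinearMap.congr_fun (h.ext_fibers (f := S₀ ∘ₗ (F j).subtype ∘ₗ p j)
        (g := (F j).subtype ∘ₗ p j ∘ₗ S₀) fun i u hu => ?_) v
      show S₀ (p j u : V) = (p j (S₀ u) : V)
      rw [hS₀ i u hu]
      by_cases hij : i = j
      · subst hij
        rw [hp i ⟨u, hu⟩, hS₀ i u hu, hp]
      · rw [hp0 _ _ hij u hu, hp0 _ _ hij _ (p i _).2]; simp
    refine (hdec v).trans (Finset.sum_eq_zero fun j _ => ?_)
    set u : V := ((p j v : F j) : V) with hu
    have huF : u ∈ F j := (p j v).2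
    have hz : ((p j (Θ u) : F j) : V) = 0 := by
      rw [← hS₀ j u huF, hu, hS₀p, hv]; simp
    have hzk : ∀ k : ℕ, (p (j + k) (Θ u) : V) = 0 := by
      intro k
      induction k with
      | zero => rw [Nat.cast_zero, add_zero]; exact hz
      | succ k ih =>
        rw [Nat.cast_succ, ← add_assoc, ← hΨ'Θ, hpΨ', ih, map_zero]
    have hΘu : Θ u = 0 := by
      refine (hdec (Θ u)).trans (Finset.sum_eq_zero fun i _ => ?_)
      have := hzk (i - j).val
      rwa [ZMod.natCast_zmod_val, add_sub_cancel] at this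
    have heu := (h.sum_pow_apply_eq_zero_iff h2 u).2 (hΘ0 u hΘu)
    have h5 := congrArg (fun x => (p j x : V)) heu
    simp only [_root_.sum_apply, map_sum, map_zero, ZeroMemClass.coe_zero] at h5
    rw [Finset.sum_eq_single_of_mem 0 (Finset.mem_range.2 (NeZero.pos m))] at h5
    · simpa [hp j ⟨u, huF⟩] using h5
    · intro k hk hk0
      refine hp0 _ _ (fun e => hk0 ?_) _ (pow_apply_mem h1 k huF)
      have e : ((k : ℕ) : ZMod m) = 0 := by simpa using e
      rw [ZMod.natCast_eq_zero_iff] at e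
      exact Nat.eq_zero_of_dvd_of_lt e (Finset.mem_range.1 hk)
  obtain ⟨u, hu⟩ := fiberAlg_isUnit_of_injective hSinj
  refine ⟨u, ?_⟩
  rw [hu]
  refine ContinuousLinearMap.coe_injective (h.ext_fibers fun j v hv => ?_)
  show Ψ' (S₀ v) = S₀ (Ψ v)
  rw [hS₀ j v hv, hS₀ _ _ (h1 j v hv), hΘΨ, ← hpΨ', hΨ'Θ]

lemma quotIso_of_unit (hm : 2 ≤ m) {Ψ Ψ' : V →L[ℂ] V}
    (hΨ' : IsClutch ρ F Ψ') (S : (fiberAlg ρ F)ˣ)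
    (hS : Ψ' * (S : fiberAlg ρ F) = (S : fiberAlg ρ F) * Ψ) : QuotIso ρ F Ψ Ψ' := by
  obtain ⟨h1', h2', h3'⟩ := (h.isClutch_iff hm).1 hΨ'
  have hmap : ∀ {Φ Φ' : V →L[ℂ] V} {R : fiberAlg ρ F}, Φ' * R = R * Φ →
      clutchSub F Φ ≤ (clutchSub F Φ').comap ((R : V →L[ℂ] V) : V →ₗ[ℂ] V) := by
    intro Φ Φ' R hR
    refine Submodule.span_le.2 ?_
    rintro _ ⟨j, u, -, rfl⟩
    show (R : V →L[ℂ] V) (u - Φ u) ∈ clutchSub F Φ'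
    have e : (R : V →L[ℂ] V) (Φ u) = Φ' ((R : V →L[ℂ] V) u) := (DFunLike.congr_fun hR u).symm
    rw [map_sub, e]
    exact h.sub_mem_clutchSub _ _
  have hS' : Ψ * (↑S⁻¹ : fiberAlg ρ F) = (↑S⁻¹ : fiberAlg ρ F) * Ψ' := by
    have e1 : ((S : fiberAlg ρ F) : V →L[ℂ] V) * (↑S⁻¹ : fiberAlg ρ F) = 1 :=
      congrArg Subtype.val S.mul_inv
    have e2 : ((↑S⁻¹ : fiberAlg ρ F) : V →L[ℂ] V) * (S : fiberAlg ρ F) = 1 :=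
      congrArg Subtype.val S.inv_mul
    calc Ψ * (↑S⁻¹ : fiberAlg ρ F)
        = ((↑S⁻¹ : fiberAlg ρ F) : V →L[ℂ] V) * ((S : fiberAlg ρ F) * Ψ) *
          (↑S⁻¹ : fiberAlg ρ F) := by rw [← mul_assoc, e2, one_mul]
      _ = _ := by rw [← hS, mul_assoc, mul_assoc, e1, mul_one]
  refine ⟨Submodule.mapQ _ _ _ (hmap hS), ?_, ?_⟩
  · refine Function.bijective_iff_has_inverse.2 ⟨Submodule.mapQ _ _ _ (hmap hS'), ?_, ?_⟩
    · intro x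
      obtain ⟨v, rfl⟩ := Submodule.mkQ_surjective _ x
      simp only [Submodule.mkQ_apply, Submodule.mapQ_apply]
      congr 1
      exact DFunLike.congr_fun (congrArg Subtype.val S.inv_mul) v
    · intro x
      obtain ⟨v, rfl⟩ := Submodule.mkQ_surjective _ x
      simp only [Submodule.mkQ_apply, Submodule.mapQ_apply]
      congr 1
      exact DFunLike.congr_fun (congrArg Subtype.val S.mul_inv) v
  · intro g v w hvw
    simp only [Submodule.mkQ_apply, Submodule.mapQ_apply] at hvw ⊢
    have hvw := (Submodule.Quotient.eq _).1 hvw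
    refine (Submodule.Quotient.eq _).2 ?_
    have e : ((S : fiberAlg ρ F) : V →L[ℂ] V) (ρ g v)
        = ρ g (((S : fiberAlg ρ F) : V →L[ℂ] V) v) := (S : fiberAlg ρ F).2.2 g v
    have hg : clutchSub F Ψ' ≤ (clutchSub F Ψ').comap (ρ g) := by
      refine Submodule.span_le.2 ?_
      rintro _ ⟨j, u, -, rfl⟩
      show ρ g (u - Ψ' u) ∈ clutchSub F Ψ'
      rw [map_sub, ← h3']
      exact h.sub_mem_clutchSub _ _
    show ((S : fiberAlg ρ F) : V →L[ℂ] V) (ρ g v) - ρ g w ∈ clutchSub F Ψ'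
    rw [e, ← map_sub]
    exact hg hvw

/-! ### The endomorphism algebra of an isotypical bundle -/

lemma pow_smul_eq (l : ℕ) (j : ZMod m) : a₀ ^ l • j = j + l := by
  induction l generalizing j with
  | zero => simp
  | succ l ih => rw [pow_succ', mul_smul, ih, h.smul_eq, Nat.cast_succ, add_assoc]

lemma inv_pow_smul_eq (l : ℕ) (j : ZMod m) : (a₀ ^ l)⁻¹ • j = j - l := by
  rw [inv_smul_eq_iff, h.pow_smul_eq, sub_add_cancel]

lemma pow_mem_ker : a₀ ^ m ∈ (MulAction.toPermHom N₂ (ZMod m)).ker := by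
  rw [MonoidHom.mem_ker]
  ext j
  simp [h.pow_smul_eq]

lemma fiberAlg_ext [NeZero m] {X Y : fiberAlg ρ F}
    (hXY : ∀ u ∈ F 0, (X : V →L[ℂ] V) u = (Y : V →L[ℂ] V) u) : X = Y := by
  refine Subtype.ext (ContinuousLinearMap.coe_injective (h.ext_fibers fun j u hu => ?_))
  show (X : V →L[ℂ] V) u = (Y : V →L[ℂ] V) u
  have h0 : ρ (a₀ ^ j.val)⁻¹ u ∈ F 0 := by
    have := h.rho_mem (a₀ ^ j.val)⁻¹ hu
    rwa [h.inv_pow_smul_eq, ZMod.natCast_zmod_val, sub_self] at this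
  rw [← rho_apply_inv ρ (a₀ ^ j.val) u, X.2.2, Y.2.2, hXY _ h0]

/-- An `N₀`-equivariant endomorphism of `F 0`, given as an operator `τ` on `V` vanishing on the other
fibers, extends to an endomorphism of the bundle, namely the sum of its conjugates by
`1, a₀, …, a₀ ^ (m - 1)`. -/
lemma exists_extension [NeZero m] [FiniteDimensional ℂ V] (τ : V →ₗ[ℂ] V)
    (h0 : ∀ v, τ v ∈ F 0) (hτ : ∀ j ≠ 0, ∀ u ∈ F j, τ u = 0)
    (hn : ∀ n ∈ (MulAction.toPermHom N₂ (ZMod m)).ker, ∀ v, τ (ρ n v) = ρ n (τ v)) :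
    ∃ X : fiberAlg ρ F, ∀ u ∈ F 0, (X : V →L[ℂ] V) u = τ u := by
  let X₀ : V →ₗ[ℂ] V := ∑ l ∈ Finset.range m, ρ (a₀ ^ l) ∘ₗ τ ∘ₗ ρ (a₀ ^ l)⁻¹
  have hX₀ : ∀ v, X₀ v = ∑ l ∈ Finset.range m, ρ (a₀ ^ l) (τ (ρ (a₀ ^ l)⁻¹ v)) := fun v => by
    simp [X₀]
  have hzero : ∀ (l : ℕ) (j : ZMod m), j ≠ l → ∀ u ∈ F j,
      ρ (a₀ ^ l) (τ (ρ (a₀ ^ l)⁻¹ u)) = 0 := by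
    intro l j hj u hu
    have := h.rho_mem (a₀ ^ l)⁻¹ hu
    rw [h.inv_pow_smul_eq] at this
    rw [hτ _ (sub_ne_zero.2 hj) _ this, map_zero]
  have hF : ∀ j, ∀ u ∈ F j, X₀ u ∈ F j := by
    intro j u hu
    rw [hX₀]
    refine Submodule.sum_mem _ fun l _ => ?_
    by_cases hj : j = l
    · have := h.rho_mem (a₀ ^ l) (h0 (ρ (a₀ ^ l)⁻¹ u))
      rwa [h.pow_smul_eq, zero_add, ← hj] at this
    · rw [hzero l j hj u hu]; exact zero_mem _
  have hker : ∀ n ∈ (MulAction.toPermHom N₂ (ZMod m)).ker, ∀ v, X₀ (ρ n v) = ρ n (X₀ v) := by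
    intro n hnk v
    simp only [hX₀, map_sum]
    refine Finset.sum_congr rfl fun l _ => ?_
    have hc := (inferInstance : (MulAction.toPermHom N₂ (ZMod m)).ker.Normal).conj_mem n hnk
      (a₀ ^ l)⁻¹
    have e1 : ρ (a₀ ^ l)⁻¹ (ρ n v) = ρ ((a₀ ^ l)⁻¹ * n * (a₀ ^ l)⁻¹⁻¹) (ρ (a₀ ^ l)⁻¹ v) := by
      simp only [← Module.End.mul_apply, ← map_mul]
      congr 2; group
    have e2 : ∀ w, ρ (a₀ ^ l) (ρ ((a₀ ^ l)⁻¹ * n * (a₀ ^ l)⁻¹⁻¹) w) = ρ n (ρ (a₀ ^ l) w) := by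
      intro w
      rw [← Module.End.mul_apply, ← map_mul, ← Module.End.mul_apply, ← map_mul]
      congr 2; group
    rw [e1, hn _ hc, e2]
  have ha : ∀ v, X₀ (ρ a₀ v) = ρ a₀ (X₀ v) := by
    intro v
    simp only [hX₀, map_sum]
    have hs : ∀ l : ℕ, ρ a₀ (ρ (a₀ ^ l) (τ (ρ (a₀ ^ l)⁻¹ v)))
        = ρ (a₀ ^ (l + 1)) (τ (ρ (a₀ ^ (l + 1))⁻¹ (ρ a₀ v))) := by
      intro l
      have e1 : ρ (a₀ ^ (l + 1))⁻¹ (ρ a₀ v) = ρ (a₀ ^ l)⁻¹ v := by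
        rw [← Module.End.mul_apply, ← map_mul]
        congr 2; group
      rw [e1, pow_succ', map_mul, Module.End.mul_apply]
    simp only [hs]
    -- the two sums differ by the terms `l = 0` and `l = m`, which agree since `a₀ ^ m ∈ N₀`
    have e2 := (Finset.sum_range_succ
      (fun l => ρ (a₀ ^ l) (τ (ρ (a₀ ^ l)⁻¹ (ρ a₀ v)))) m).symm.trans
      (Finset.sum_range_succ' _ m)
    have e3 : ρ (a₀ ^ m) (τ (ρ (a₀ ^ m)⁻¹ (ρ a₀ v)))
        = ρ (a₀ ^ 0) (τ (ρ (a₀ ^ 0)⁻¹ (ρ a₀ v))) := by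
      rw [hn _ (inv_mem h.pow_mem_ker), rho_apply_inv]; simp
    rw [e3] at e2
    exact add_right_cancel e2
  have hρ : ∀ g v, X₀ (ρ g v) = ρ g (X₀ v) := by
    refine h.induction_gen hker ha (fun g g' hg hg' v => ?_) fun g hg v => ?_
    · rw [map_mul, Module.End.mul_apply, hg, hg', Module.End.mul_apply]
    · rw [← rho_inv_apply ρ g (X₀ (ρ g⁻¹ v)), ← hg, rho_apply_inv]
  refine ⟨⟨LinearMap.toContinuousLinearMap X₀, hF, hρ⟩, fun u hu => ?_⟩
  show X₀ u = τ u
  rw [hX₀, Finset.sum_eq_single_of_mem 0 (Finset.mem_range.2 (NeZero.pos m))]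
  · simp
  · intro l hl hl0
    refine hzero l 0 (fun e => hl0 ?_) u hu
    have e := e.symm
    rw [ZMod.natCast_eq_zero_iff] at e
    exact Nat.eq_zero_of_dvd_of_lt e (Finset.mem_range.1 hl)

/-- If `F 0` is isotypical with `k` irreducible summands, the endomorphism algebra of the bundle
is a `k × k` matrix algebra. -/
lemma exists_isMatrixUnits [NeZero m] [FiniteDimensional ℂ V]
    (hisot : ∃ (k : ℕ) (U : Fin k → Submodule ℂ V),
      (∀ i, U i ≤ F (0 : ZMod m)) ∧
      (∀ i, ∀ g ∈ (MulAction.toPermHom N₂ (ZMod m)).ker, (U i).map (ρ g) ≤ U i) ∧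
      (∀ i, U i ≠ ⊥) ∧
      (∀ i, ∀ U' ≤ U i,
        (∀ g ∈ (MulAction.toPermHom N₂ (ZMod m)).ker, U'.map (ρ g) ≤ U') →
        U' = ⊥ ∨ U' = U i) ∧
      (∀ i i', ∃ e : ↥(U i) →ₗ[ℂ] ↥(U i'), Function.Bijective e ∧
        ∀ g ∈ (MulAction.toPermHom N₂ (ZMod m)).ker, ∀ u w : ↥(U i),
          (w : V) = ρ g u → (e w : V) = ρ g (e u)) ∧
      iSupIndep U ∧ iSup U = F (0 : ZMod m)) :
    ∃ (k : ℕ) (ε : Fin k → Fin k → fiberAlg ρ F), IsMatrixUnits ε := by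
  obtain ⟨k, U, hU0, hUinv, hUne, hUirr, hUiso, hUind, hUsup⟩ := hisot
  rcases k with _ | k
  · refine ⟨0, fun i => i.elim0, fun i => i.elim0, h.fiberAlg_ext fun u hu => ?_,
      fun _ i => i.elim0⟩
    rw [← hUsup, iSup_of_empty, Submodule.mem_bot] at hu
    rw [hu, map_zero, map_zero]
  choose e he heq using fun i => hUiso 0 i
  obtain ⟨p, hp, hp0⟩ := exists_proj_of_iSupIndep hUind
  obtain ⟨π, hπ, hπ0⟩ := exists_proj_of_iSupIndep h.internal.submodule_iSupIndep
  let E := fun i => LinearEquiv.ofBijective (e i) (he i)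
  let f : ∀ i, U 0 →ₗ[ℂ] V := fun i => (U i).subtype ∘ₗ e i
  let q : ∀ i, V →ₗ[ℂ] U 0 := fun i => (E i).symm ∘ₗ p i ∘ₗ (F 0).subtype ∘ₗ π 0
  have hfU : ∀ i x, f i x ∈ U i := fun i x => (e i x).2
  have hf0 : ∀ i x, f i x ∈ F 0 := fun i x => hU0 i (hfU i x)
  have hqp : ∀ i, ∀ u ∈ F 0, q i u = (E i).symm (p i u) := fun i u hu => by
    show (E i).symm (p i (π 0 u : V)) = _
    rw [hπ 0 ⟨u, hu⟩]
  have hqf : ∀ i j x, q j (f i x) = if j = i then x else 0 := by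
    intro i j x
    rw [hqp j _ (hf0 i x)]
    split_ifs with hij
    · subst hij
      rw [LinearEquiv.symm_apply_eq]
      exact hp j (e j x)
    · rw [hp0 j i (Ne.symm hij) _ (hfU i x), map_zero]
  have hq0 : ∀ i j, j ≠ 0 → ∀ u ∈ F j, q i u = 0 := fun i j hj u hu => by
    show (E i).symm (p i (π 0 u : V)) = 0
    rw [hπ0 0 j hj u hu]; simp
  have hsurj : ∀ i, ∀ u ∈ U i, ∃ x, f i x = u := fun i u hu => by
    obtain ⟨x, hx⟩ := (he i).2 ⟨u, hu⟩
    exact ⟨x, congrArg Subtype.val hx⟩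
  have hfρ : ∀ n ∈ (MulAction.toPermHom N₂ (ZMod m)).ker, ∀ i, ∀ x y : U 0,
      (y : V) = ρ n x → f i y = ρ n (f i x) := fun n hn i x y hxy => heq i n hn x y hxy
  have hmem : ∀ n ∈ (MulAction.toPermHom N₂ (ZMod m)).ker, ∀ i, ∀ u ∈ U i, ρ n u ∈ U i :=
    fun n hn i u hu => hUinv i n hn (Submodule.mem_map_of_mem hu)
  have hqρ : ∀ n ∈ (MulAction.toPermHom N₂ (ZMod m)).ker, ∀ i v,
      (q i (ρ n v) : V) = ρ n (q i v) := by
    intro n hn i v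
    refine LinearMap.congr_fun (h.ext_fibers (f := (U 0).subtype ∘ₗ q i ∘ₗ ρ n)
      (g := ρ n ∘ₗ (U 0).subtype ∘ₗ q i) fun j u hu => ?_) v
    by_cases hj : j = 0
    · subst hj
      rw [← hUsup] at hu
      refine eq_of_mem_iSup hu fun l w hw => ?_
      obtain ⟨x, rfl⟩ := hsurj l w hw
      show (q i (ρ n (f l x)) : V) = ρ n (q i (f l x) : V)
      rw [← hfρ n hn l x ⟨ρ n x, hmem n hn 0 x x.2⟩ rfl, hqf, hqf]
      split_ifs <;> simp
    · show (q i (ρ n u) : V) = ρ n (q i u : V)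
      have := h.rho_mem n hu
      rw [smul_eq_of_mem_ker hn] at this
      rw [hq0 i j hj u hu, hq0 i j hj _ this]; simp
  have hsum : ∀ u ∈ F 0, ∑ i, f i (q i u) = u := by
    intro u hu
    rw [← hUsup] at hu
    have := eq_of_mem_iSup (f := ∑ i, f i ∘ₗ q i) (g := LinearMap.id) hu fun l w hw => by
      obtain ⟨x, rfl⟩ := hsurj l w hw
      simp only [LinearMap.sum_apply, LinearMap.comp_apply, hqf, LinearMap.id_apply]
      rw [Finset.sum_eq_single_of_mem l (Finset.mem_univ _) fun i _ hi => by simp [hi], if_pos rfl]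
    simpa using this
  choose ε hε using fun i j => h.exists_extension (f i ∘ₗ q j) (fun v => hf0 i _)
    (fun l hl u hu => by simp [hq0 j l hl u hu])
    (fun n hn v => hfρ n hn i _ _ (hqρ n hn j v))
  have hε' : ∀ i j, ∀ u ∈ F 0, (ε i j : V →L[ℂ] V) u = f i (q j u) := hε
  refine ⟨k + 1, ε, fun i j l r => h.fiberAlg_ext fun u hu => ?_,
    h.fiberAlg_ext fun u hu => ?_, fun X i j => ?_⟩
  · show (ε i j : V →L[ℂ] V) ((ε l r : V →L[ℂ] V) u) = _
    rw [hε' l r u hu, hε' i j _ (hf0 _ _), hqf]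
    split_ifs
    · exact (hε' i r u hu).symm
    · simp
  · simp only [AddSubmonoidClass.coe_finsetSum, _root_.sum_apply]
    rw [Finset.sum_congr rfl fun i _ => hε' i i u hu, hsum u hu]
    rfl
  · -- Schur's lemma for the endomorphism `q i ∘ X ∘ f j` of the irreducible `U 0`
    let A : Module.End ℂ (U 0) := q i ∘ₗ ((X : V →L[ℂ] V) : V →ₗ[ℂ] V) ∘ₗ f j
    have hA : ∀ x, A x = q i ((X : V →L[ℂ] V) (f j x)) := fun _ => rfl
    have : Nontrivial (U 0) := Submodule.nontrivial_iff_ne_bot.2 (hUne 0)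
    obtain ⟨c, hc⟩ := Module.End.exists_eigenvalue A
    have hAc : ∀ x, A x = c • x := by
      have hle : (A.eigenspace c).map (U 0).subtype ≤ U 0 := by
        rintro _ ⟨x, -, rfl⟩; exact x.2
      have hinv : ∀ n ∈ (MulAction.toPermHom N₂ (ZMod m)).ker,
          ((A.eigenspace c).map (U 0).subtype).map (ρ n) ≤ (A.eigenspace c).map (U 0).subtype := by
        intro n hn
        rintro _ ⟨_, ⟨x, hx, rfl⟩, rfl⟩
        refine ⟨⟨ρ n x, hmem n hn 0 x x.2⟩, ?_, rfl⟩
        refine Module.End.mem_eigenspace_iff.2 (Subtype.ext ?_)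
        rw [hA, hfρ n hn j x _ rfl, X.2.2, hqρ n hn, ← hA, Module.End.mem_eigenspace_iff.1 hx]
        exact map_smul (ρ n) c (x : V)
      rcases hUirr 0 _ hle hinv with hbot | htop
      · obtain ⟨x, hx, hx0⟩ := hc.exists_hasEigenvector
        have hxb : (x : V) ∈ (⊥ : Submodule ℂ V) := hbot ▸ ⟨x, hx, rfl⟩
        exact absurd (Subtype.ext ((Submodule.mem_bot ℂ).1 hxb)) hx0
      · intro x
        have hx : (x : V) ∈ (A.eigenspace c).map (U 0).subtype := by rw [htop]; exact x.2
        obtain ⟨y, hy, hyx⟩ := hx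
        rw [← Subtype.ext hyx]
        exact Module.End.mem_eigenspace_iff.1 hy
    refine ⟨c, h.fiberAlg_ext fun u hu => ?_⟩
    show (ε i i : V →L[ℂ] V) ((X : V →L[ℂ] V) ((ε j j : V →L[ℂ] V) u))
      = c • (ε i j : V →L[ℂ] V) u
    rw [hε' j j u hu, hε' i i _ (X.2.1 _ _ (hf0 _ _)), ← hA, hAc, map_smul, hε' i j u hu]

/-! ### Reduction to a conjugacy class -/

/-- Conjugation by `Ψ` is an automorphism of the matrix algebra `fiberAlg ρ F`, hence inner, given by
some `S`. Then `S⁻¹ Ψ` commutes with the algebra, so that its `m`-th power is central and therefore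
scalar; rescaling by an `m`-th root makes that power equal to `1`. -/
lemma exists_factorization [NeZero m] [FiniteDimensional ℂ V] (hm : 2 ≤ m) {k : ℕ}
    {ε : Fin k → Fin k → fiberAlg ρ F} (hε : IsMatrixUnits ε) {Ψ : V →L[ℂ] V}
    (hΨ : IsClutch ρ F Ψ) :
    ∃ (T : fiberAlg ρ F) (B : V →L[ℂ] V), Ψ = T * B ∧ T ^ m = 1 ∧ B ^ m = 1 ∧
      (∀ X : fiberAlg ρ F, B * X = X * B) ∧ (∀ j, ∀ u ∈ F j, B u ∈ F (j + 1)) ∧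
      ∀ g v, B (ρ g v) = ρ g (B v) := by
  obtain ⟨h1, h2, h3⟩ := (h.isClutch_iff hm).1 hΨ
  have : FiniteDimensional ℂ (V →L[ℂ] V) := inferInstance
  have hPΨ : Ψ ^ (m - 1) * Ψ = 1 := by rw [← pow_succ, Nat.sub_add_cancel (by omega), h2]
  have hΨP : Ψ * Ψ ^ (m - 1) = 1 := by rw [← pow_succ', Nat.sub_add_cancel (by omega), h2]
  have hcast : ((m - 1 : ℕ) : ZMod m) + 1 = 0 := by
    rw [← Nat.cast_succ, Nat.succ_eq_add_one, Nat.sub_add_cancel (by omega), ZMod.natCast_self]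
  -- conjugation by `Ψ` preserves the algebra
  have hmem : ∀ X : fiberAlg ρ F, Ψ * X * Ψ ^ (m - 1) ∈ fiberAlg ρ F := by
    refine fun X => ⟨fun j u hu => ?_, fun g v => ?_⟩
    · have := h1 _ _ (X.2.1 _ _ (pow_apply_mem h1 (m - 1) hu))
      rwa [add_assoc, hcast, add_zero] at this
    · show Ψ ((X : V →L[ℂ] V) ((Ψ ^ (m - 1)) (ρ g v))) = ρ g (Ψ ((X : V →L[ℂ] V) _))
      rw [pow_rho_comm h3, X.2.2, h3]; rfl
  let σ : fiberAlg ρ F →ₐ[ℂ] fiberAlg ρ F := AlgHom.ofLinearMap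
    { toFun := fun X => ⟨Ψ * X * Ψ ^ (m - 1), hmem X⟩
      map_add' := fun X Y => Subtype.ext (by simp [mul_add, add_mul])
      map_smul' := fun c X => Subtype.ext (by simp) }
    (Subtype.ext (by simp [hΨP]))
    (fun X Y => Subtype.ext (by
      show Ψ * ((X : V →L[ℂ] V) * Y) * Ψ ^ (m - 1)
        = (Ψ * X * Ψ ^ (m - 1)) * (Ψ * Y * Ψ ^ (m - 1))
      calc Ψ * ((X : V →L[ℂ] V) * Y) * Ψ ^ (m - 1)
          = Ψ * X * 1 * Y * Ψ ^ (m - 1) := by simp only [mul_one, mul_assoc]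
        _ = _ := by rw [← hPΨ]; simp only [mul_assoc]))
  obtain ⟨S, hS⟩ := hε.exists_unit_of_algHom σ
  have hS' : ∀ X : fiberAlg ρ F, Ψ * X * Ψ ^ (m - 1) * (S : fiberAlg ρ F)
      = (S : fiberAlg ρ F) * X := fun X => congrArg Subtype.val (hS X)
  have e1 : ((S : fiberAlg ρ F) : V →L[ℂ] V) * (↑S⁻¹ : fiberAlg ρ F) = 1 :=
    congrArg Subtype.val S.mul_inv
  have e2 : ((↑S⁻¹ : fiberAlg ρ F) : V →L[ℂ] V) * (S : fiberAlg ρ F) = 1 :=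
    congrArg Subtype.val S.inv_mul
  let B : V →L[ℂ] V := (↑S⁻¹ : fiberAlg ρ F) * Ψ
  have hBF : ∀ j, ∀ u ∈ F j, B u ∈ F (j + 1) := fun j u hu =>
    (↑S⁻¹ : fiberAlg ρ F).2.1 _ _ (h1 j u hu)
  have hBρ : ∀ g v, B (ρ g v) = ρ g (B v) := by
    intro g v
    show ((↑S⁻¹ : fiberAlg ρ F) : V →L[ℂ] V) (Ψ (ρ g v)) = ρ g _
    rw [h3, (↑S⁻¹ : fiberAlg ρ F).2.2]; rfl
  have hBX : ∀ X : fiberAlg ρ F, B * X = X * B := by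
    intro X
    have hX : Ψ * X = (S : fiberAlg ρ F) * X * (↑S⁻¹ : fiberAlg ρ F) * Ψ := by
      rw [← hS' X, mul_assoc _ ((S : fiberAlg ρ F) : V →L[ℂ] V), e1, mul_one, mul_assoc _ _ Ψ, hPΨ,
        mul_one]
    show (↑S⁻¹ : fiberAlg ρ F) * Ψ * (X : V →L[ℂ] V) = X * ((↑S⁻¹ : fiberAlg ρ F) * Ψ)
    rw [mul_assoc, hX]
    simp only [← mul_assoc]
    rw [e2, one_mul]
  -- `B ^ m` is a central element of the algebra, hence a scalar
  let z : fiberAlg ρ F := ⟨B ^ m, fun j u hu => by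
    have := pow_apply_mem hBF m hu
    rwa [ZMod.natCast_self, add_zero] at this, pow_rho_comm hBρ m⟩
  obtain ⟨c₀, hc₀⟩ := hε.exists_scalar_of_commute (z := z) fun X => Subtype.ext
    (((show Commute B (X : V →L[ℂ] V) from hBX X).pow_left m).eq)
  have hc₀ : B ^ m = c₀ • 1 := congrArg Subtype.val hc₀
  obtain ⟨c, hc0, hc⟩ : ∃ c : ℂ, c ≠ 0 ∧ B ^ m = c • 1 := by
    by_cases hc : c₀ = 0
    · -- a vanishing scalar forces `V = 0`
      have hB1 : (Ψ ^ (m - 1) * (S : fiberAlg ρ F)) * B = 1 := by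
        show (Ψ ^ (m - 1) * (S : fiberAlg ρ F)) * ((↑S⁻¹ : fiberAlg ρ F) * Ψ) = 1
        rw [mul_assoc, ← mul_assoc _ _ Ψ, e1, one_mul, hPΨ]
      have hB2 : B * (Ψ ^ (m - 1) * (S : fiberAlg ρ F)) = 1 := by
        show (↑S⁻¹ : fiberAlg ρ F) * Ψ * (Ψ ^ (m - 1) * ((S : fiberAlg ρ F) : V →L[ℂ] V)) = 1
        rw [mul_assoc, ← mul_assoc Ψ, hΨP, one_mul, e2]
      have hu : IsUnit B := ⟨⟨B, _, hB2, hB1⟩, rfl⟩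
      have := hu.pow m
      rw [hc₀, hc, zero_smul, isUnit_zero_iff] at this
      exact ⟨1, one_ne_zero, by rw [hc₀, hc, zero_smul, one_smul, this]⟩
    · exact ⟨c₀, hc, hc₀⟩
  obtain ⟨μ, hμ⟩ := IsAlgClosed.exists_pow_nat_eq c (n := m) (by omega)
  have hμ0 : μ ≠ 0 := by
    rintro rfl
    rw [zero_pow (by omega)] at hμ
    exact hc0 hμ.symm
  have hB'm : (μ⁻¹ • B) ^ m = 1 := by
    rw [smul_pow, hc, smul_smul, inv_pow, hμ, inv_mul_cancel₀ hc0, one_smul]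
  have hB'X : ∀ X : fiberAlg ρ F, (μ⁻¹ • B) * X = X * (μ⁻¹ • B) := fun X => by
    rw [smul_mul_assoc, hBX, mul_smul_comm]
  have hfac : Ψ = ((μ • (S : fiberAlg ρ F) : fiberAlg ρ F) : V →L[ℂ] V) * (μ⁻¹ • B) := by
    show Ψ = (μ • ((S : fiberAlg ρ F) : V →L[ℂ] V)) * (μ⁻¹ • ((↑S⁻¹ : fiberAlg ρ F) * Ψ))
    rw [smul_mul_smul_comm, mul_inv_cancel₀ hμ0, one_smul, ← mul_assoc, e1, one_mul]
  refine ⟨μ • S, μ⁻¹ • B, hfac, Subtype.ext ?_, hB'm, hB'X,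
    fun j u hu => (F _).smul_mem _ (hBF j u hu), fun g v => ?_⟩
  · have hcomm : Commute ((μ • (S : fiberAlg ρ F) : fiberAlg ρ F) : V →L[ℂ] V) (μ⁻¹ • B) :=
      (hB'X _).symm
    have := hcomm.mul_pow m
    rw [← hfac, h2, hB'm, mul_one] at this
    exact this.symm
  · show μ⁻¹ • B (ρ g v) = ρ g (μ⁻¹ • B v)
    rw [hBρ, map_smul]

/-- Right multiplication by `B`, where `Ψ = T B` is the factorization above, is a homeomorphism from
the conjugacy class of `T` onto the space of clutching maps with quotient isomorphic to `F/ψ`. -/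
theorem simplyConnectedSpace_clutch [NeZero m] [FiniteDimensional ℂ V] (hm : 2 ≤ m) {k : ℕ}
    {ε : Fin k → Fin k → fiberAlg ρ F} (hε : IsMatrixUnits ε) {Ψ : V →L[ℂ] V}
    (hΨ : IsClutch ρ F Ψ) :
    SimplyConnectedSpace {Ψ' : V →L[ℂ] V // IsClutch ρ F Ψ' ∧ QuotIso ρ F Ψ Ψ'} := by
  obtain ⟨T, B, hfac, hT, hB, hBX, hBF, hBρ⟩ := h.exists_factorization hm hε hΨ
  have : FiniteDimensional ℂ (V →L[ℂ] V) := inferInstance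
  have hsc : SimplyConnectedSpace (conjOrbit T) :=
    simplyConnectedSpace_conjOrbit (m := m) (by omega) hT
  have e1 : ∀ S : (fiberAlg ρ F)ˣ,
      ((S : fiberAlg ρ F) : V →L[ℂ] V) * (↑S⁻¹ : fiberAlg ρ F) = 1 := fun S =>
    congrArg Subtype.val S.mul_inv
  have e2 : ∀ S : (fiberAlg ρ F)ˣ,
      ((↑S⁻¹ : fiberAlg ρ F) : V →L[ℂ] V) * (S : fiberAlg ρ F) = 1 := fun S =>
    congrArg Subtype.val S.inv_mul
  have hmem : ∀ Y : conjOrbit T, IsClutch ρ F ((Y : fiberAlg ρ F) * B) ∧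
      QuotIso ρ F Ψ ((Y : fiberAlg ρ F) * B) := by
    rintro ⟨Y, S, hY⟩
    have hYm : Y ^ m = 1 := by rw [hY, Units.conj_pow, hT, mul_one, Units.mul_inv]
    have hYc : IsClutch ρ F (Y * B) := by
      refine (h.isClutch_iff hm).2 ⟨fun j u hu => Y.2.1 _ _ (hBF j u hu), ?_, fun g v => ?_⟩
      · rw [(show Commute (Y : V →L[ℂ] V) B from (hBX Y).symm).mul_pow, hB, mul_one]
        exact congrArg Subtype.val hYm
      · show (Y : V →L[ℂ] V) (B (ρ g v)) = ρ g ((Y : V →L[ℂ] V) (B v))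
        rw [hBρ, Y.2.2]
    refine ⟨hYc, h.quotIso_of_unit hm hYc S ?_⟩
    have hYS : (Y : V →L[ℂ] V) * (S : fiberAlg ρ F) = (S : fiberAlg ρ F) * T := by
      have : Y * S = S * T := by rw [hY, mul_assoc, Units.inv_mul, mul_one]
      exact congrArg Subtype.val this
    rw [mul_assoc, hBX, ← mul_assoc, hYS, mul_assoc, ← hfac]
  let f : conjOrbit T → {Ψ' : V →L[ℂ] V // IsClutch ρ F Ψ' ∧ QuotIso ρ F Ψ Ψ'} :=
    fun Y => ⟨(Y : fiberAlg ρ F) * B, hmem Y⟩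
  have hf : Continuous f := Continuous.subtype_mk
    ((continuous_subtype_val.comp continuous_subtype_val).mul continuous_const) _
  have hemb : IsEmbedding f := by
    -- right multiplication by `B ^ (m - 1)` inverts `f`
    let g : {Ψ' : V →L[ℂ] V // IsClutch ρ F Ψ' ∧ QuotIso ρ F Ψ Ψ'} → V →L[ℂ] V :=
      fun Φ => (Φ : V →L[ℂ] V) * B ^ (m - 1)
    have hg : Continuous g := by fun_prop
    refine IsEmbedding.of_comp (f := f) (g := g) hf hg ?_
    have : g ∘ f = Subtype.val ∘ Subtype.val := by
      funext Y
      show ((Y : fiberAlg ρ F) : V →L[ℂ] V) * B * B ^ (m - 1) = _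
      rw [mul_assoc, ← pow_succ', Nat.sub_add_cancel (by omega), hB, mul_one]; rfl
    rw [this]
    exact IsEmbedding.subtypeVal.comp IsEmbedding.subtypeVal
  have hsurj : Function.Surjective f := by
    rintro ⟨Ψ', hΨ', hQ⟩
    obtain ⟨S, hS⟩ := h.exists_unit_of_quotIso hm hΨ hΨ' hQ
    refine ⟨⟨S * T * ↑S⁻¹, S, rfl⟩, Subtype.ext ?_⟩
    show ((S : fiberAlg ρ F) : V →L[ℂ] V) * T * (↑S⁻¹ : fiberAlg ρ F) * B = Ψ'
    rw [mul_assoc, ← hBX, ← mul_assoc, mul_assoc _ (T : V →L[ℂ] V), ← hfac, ← hS, mul_assoc, e1,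
      mul_one]
  exact (hemb.toHomeomorphOfSurjective hsurj).symm.toHomotopyEquiv.simplyConnectedSpace

end IsCyclicBundle
end

end


/-- Assume `N₂ = ⟨N₀, a₀⟩` where `N₀` is the kernel of the action and
`a₀ • x̄_j = x̄_{j+1}` for all `j`, and assume the `N₀`-representation `F x̄₀` is
isotypical, i.e. an internal direct sum of pairwise isomorphic irreducible
`N₀`-subrepresentations.  Then for each equivariant pointwise clutching map `ψ`, the
subset `𝒜_ψ = {ψ' ∈ 𝒜 : F/ψ' ≅ F/ψ}` of `𝒜` is simply connected. -/
theorem statement15 {m : ℕ} [NeZero m] (hm : 2 ≤ m)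
    {N₂ : Type*} [Group N₂] [MulAction N₂ (ZMod m)]
    {V : Type*} [NormedAddCommGroup V] [NormedSpace ℂ V] [FiniteDimensional ℂ V]
    (ρ : Representation ℂ N₂ V) (F : ZMod m → Submodule ℂ V)
    (hF : DirectSum.IsInternal F)
    (hρF : ∀ (g : N₂) (j : ZMod m), (F j).map (ρ g) = F (g • j))
    (a₀ : N₂) (ha₀ : ∀ j : ZMod m, a₀ • j = j + 1)
    (hgen : Subgroup.closure
      (((MulAction.toPermHom N₂ (ZMod m)).ker : Subgroup N₂) ∪ {a₀} : Set N₂) = ⊤)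
    -- `F x̄₀` is `N₀`-isotypical: an internal direct sum of pairwise isomorphic
    -- irreducible `N₀`-subrepresentations
    (hisot : ∃ (k : ℕ) (U : Fin k → Submodule ℂ V),
      (∀ i, U i ≤ F (0 : ZMod m)) ∧
      (∀ i, ∀ g ∈ (MulAction.toPermHom N₂ (ZMod m)).ker, (U i).map (ρ g) ≤ U i) ∧
      (∀ i, U i ≠ ⊥) ∧
      (∀ i, ∀ U' ≤ U i,
        (∀ g ∈ (MulAction.toPermHom N₂ (ZMod m)).ker, U'.map (ρ g) ≤ U') →
        U' = ⊥ ∨ U' = U i) ∧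
      (∀ i i', ∃ e : ↥(U i) →ₗ[ℂ] ↥(U i'), Function.Bijective e ∧
        ∀ g ∈ (MulAction.toPermHom N₂ (ZMod m)).ker, ∀ u w : ↥(U i),
          (w : V) = ρ g u → (e w : V) = ρ g (e u)) ∧
      iSupIndep U ∧ iSup U = F (0 : ZMod m))
    (Ψ : V →L[ℂ] V) (hΨ : IsClutch ρ F Ψ) :
    SimplyConnectedSpace {Ψ' : V →L[ℂ] V // IsClutch ρ F Ψ' ∧ QuotIso ρ F Ψ Ψ'} := by
  have h : IsCyclicBundle ρ F a₀ := ⟨hF, hρF, ha₀, hgen⟩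
  obtain ⟨k, ε, hε⟩ := h.exists_isMatrixUnits hisot
  exact h.simplyConnectedSpace_clutch hm hε hΨ
end
end

section
/- Assume N₂ = ⟨N₀, α₁, α₂, α₃⟩ where m = 4 and α₁·x̄_j = x̄_{−j+1}, α₂·x̄_j = x̄_{j+2}, α₃·x̄_j = x̄_{−j+3} for all j ∈ ℤ/4 (so N₂/N₀ ≅ ℤ/2 × ℤ/2 and N₁ = N₀). Then every equivariant pointwise clutching map ψ ∈ 𝒜 satisfies ψ(x̄₂) = α₃ ∘ ψ(x̄₀) ∘ α₃^{-1} and ψ(x̄₁) = α₂ ∘ ψ(x̄₃) ∘ α₂^{-1}; consequently the evaluation map 𝒜 → 𝒜^{0,3}, ψ ↦ (ψ(x̄₀), ψ(x̄₃)), is a homeomorphism onto its image 𝒜^{0,3} = {(ψ(x̄₀), ψ(x̄₃)) : ψ ∈ 𝒜}. -/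
/-! The element `α₂` acts on `ℤ/4` as the translation `j ↦ j + 2`, so condition (2) for `g = α₂`
has exponent `1` and reads `ψ(x̄_{j+2}) = α₂ ∘ ψ(x̄_j) ∘ α₂⁻¹` for every `j`.  The element `α₃` acts
as a reflection, so condition (2) for `g = α₃` has exponent `-1`, i.e. `3`; together with `ψ⁴ = id`
this says that `α₃ ∘ ψ(x̄₀) ∘ α₃⁻¹` inverts `ψ(x̄₂)`.

For the embedding, let `A = ρ α₂` and let `P j : V → F j` be the projections of the direct sum.  The
relation for `α₂` shows that `ψ` is recovered from `(ψ(x̄₀), ψ(x̄₃))` by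
`Ψ = R + A R A⁻¹`, where `R = ψ(x̄₀) P₀ + ψ(x̄₃) P₃`,
which is continuous (even linear) in the pair.  As the evaluation map is itself continuous,
composing it with this reconstruction gives the inclusion `𝒜 ⊆ End V`, hence it is an embedding. -/

/-! Setup: a group `N₂` acts on the finite set `x̄ = {x̄_j : j ∈ ℤ/m}`, modelled as a
`MulAction` of `N₂` on `ZMod m`.  An `N₂`-vector bundle `F` over `x̄` is modelled as a
finite-dimensional complex vector space `V` together with a representation
`ρ : N₂ →* End(V)` and a family of submodules `F j ⊆ V` (the fibers) forming an internal
direct sum decomposition of `V` with `ρ g (F j) = F (g • j)`.  A pointwise preclutching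
map, i.e. a family of linear isomorphisms `ψ(x̄_j) : F j → F (j+1)`, is modelled as a
single continuous linear map `Ψ : V → V` restricting to a bijection `F j → F (j+1)` on
each fiber.  For `u ∈ F j`, the iterate `ψ^k u` is then just `Ψ^k u`. -/

noncomputable section
open Function Set

open Clutch

namespace Clutch

variable {m : ℕ} {N₂ : Type*} [Group N₂] [MulAction N₂ (ZMod m)]
variable {V : Type*} [NormedAddCommGroup V] [NormedSpace ℂ V]

/-- The restriction of `Ψ` to a fiber, as a continuous linear map between fibers. -/
def fiberMap (Ψ : V →L[ℂ] V) {p q : Submodule ℂ V} (h : ∀ u ∈ p, Ψ u ∈ q) :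
    ↥p →L[ℂ] ↥q :=
  { (Ψ : V →ₗ[ℂ] V).restrict h with
    cont := Continuous.subtype_mk (Ψ.continuous.comp continuous_subtype_val) _ }

/-- The evaluation map `𝒜 → 𝒜^{0,3}`, `ψ ↦ (ψ(x̄₀), ψ(x̄₃))`. -/
def evalPair (ρ : Representation ℂ N₂ V) (F : ZMod m → Submodule ℂ V)
    (Ψ : {Ψ : V →L[ℂ] V // IsClutch ρ F Ψ}) :
    (↥(F (0 : ZMod m)) →L[ℂ] ↥(F ((0 : ZMod m) + 1))) ×
      (↥(F (3 : ZMod m)) →L[ℂ] ↥(F ((3 : ZMod m) + 1))) :=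
  (fiberMap Ψ.1 (Ψ.2.1 0).mapsTo, fiberMap Ψ.1 (Ψ.2.1 3).mapsTo)

end Clutch

namespace Clutch

/-- The projections of a finite-dimensional internal direct sum onto its summands, as continuous
linear maps. -/
lemma exists_proj {ι : Type*} [DecidableEq ι]
    {V : Type*} [NormedAddCommGroup V] [NormedSpace ℂ V] [FiniteDimensional ℂ V]
    (F : ι → Submodule ℂ V) (hF : DirectSum.IsInternal F) :
    ∃ P : ∀ j, V →L[ℂ] ↥(F j), (∀ j, ∀ u (hu : u ∈ F j), P j u = ⟨u, hu⟩) ∧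
      ∀ i j, i ≠ j → ∀ u ∈ F i, P j u = 0 := by
  let e := LinearEquiv.ofBijective (DirectSum.coeLinearMap F) hF
  have key : ∀ i u (hu : u ∈ F i), e.symm u = DirectSum.lof ℂ ι (fun i => ↥(F i)) i ⟨u, hu⟩ := by
    intro i u hu
    rw [LinearEquiv.symm_apply_eq]
    exact (DirectSum.coeLinearMap_lof F i ⟨u, hu⟩).symm
  refine ⟨fun j => LinearMap.toContinuousLinearMap
    (DirectSum.component ℂ ι (fun i => ↥(F i)) j ∘ₗ e.symm.toLinearMap), ?_, ?_⟩
  · intro j u hu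
    simp [key j u hu]
  · intro i j hij u hu
    simp [key i u hu, DirectSum.component.of, hij]

/-- A continuous linear map is determined by its restrictions to the summands of an internal
direct sum. -/
lemma ext_fibers {ι : Type*} [DecidableEq ι]
    {V : Type*} [NormedAddCommGroup V] [NormedSpace ℂ V]
    (F : ι → Submodule ℂ V) (hF : DirectSum.IsInternal F) {f g : V →L[ℂ] V}
    (h : ∀ j, ∀ u ∈ F j, f u = g u) : f = g := by
  ext v
  have hv : v ∈ ⨆ i, F i := by rw [hF.submodule_iSup_eq_top]; trivial
  refine Submodule.iSup_induction F (motive := fun v => f v = g v) hv h (by simp) ?_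
  intro x y hx hy
  simp [hx, hy]

section

variable {N₂ : Type*} [Group N₂] [MulAction N₂ (ZMod 4)]
  {V : Type*} [NormedAddCommGroup V] [NormedSpace ℂ V]
  {ρ : Representation ℂ N₂ V} {F : ZMod 4 → Submodule ℂ V} {Ψ : V →L[ℂ] V}

lemma inv_smul_translation {α : N₂} (h : ∀ j : ZMod 4, α • j = j + 2) (j : ZMod 4) :
    α⁻¹ • j = j + 2 := by
  rw [inv_smul_eq_iff, h]; revert j; decide

/-- Condition (2) for the translation `j ↦ j + 2` has exponent `1`, on every fiber. -/
lemma IsClutch.conj_translation (hΨ : IsClutch ρ F Ψ) {α : N₂}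
    (h : ∀ j : ZMod 4, α • j = j + 2) (j : ZMod 4) (u : V) (hu : u ∈ F j) :
    Ψ u = ρ α (Ψ (ρ α⁻¹ u)) := by
  have e : (α • (α⁻¹ • j + 1) - j : ZMod 4).val = 1 := by
    rw [inv_smul_translation h, h]; clear hu; revert j; decide
  have := hΨ.2.2 α j u hu
  rwa [e, pow_one] at this

/-- Condition (2) for a reflection has exponent `-1`, so that conjugation by `α` turns `ψ` into
its inverse. -/
lemma IsClutch.conj_reflection (hΨ : IsClutch ρ F Ψ) {α : N₂}
    (h : ∀ j : ZMod 4, α • j = -j + 3) (j : ZMod 4) (u : V) (hu : u ∈ F j) :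
    ρ α (Ψ (ρ α⁻¹ (Ψ u))) = u := by
  have hi : ∀ j : ZMod 4, α⁻¹ • j = -j + 3 := by
    intro j; rw [inv_smul_eq_iff, h]; revert j; decide
  have e : ∀ j : ZMod 4, (α • (α⁻¹ • j + 1) - j : ZMod 4).val = 3 := by
    intro j; rw [hi, h]; revert j; decide
  have := hΨ.2.2 α (j + 1) (Ψ u) ((hΨ.1 j).mapsTo hu)
  rw [← this, e]
  exact hΨ.2.1 j u hu

/-- Continuity of the evaluation map: restriction to a fiber is `Ψ ↦ P ∘ Ψ ∘ ι` with `ι` an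
inclusion and `P` a projection. -/
lemma continuous_evalPair [FiniteDimensional ℂ V] (hF : DirectSum.IsInternal F) :
    Continuous (evalPair ρ F) := by
  obtain ⟨P, hP, -⟩ := exists_proj F hF
  have hfib : ∀ j : ZMod 4, Continuous fun Ψ : {Ψ : V →L[ℂ] V // IsClutch ρ F Ψ} =>
      fiberMap Ψ.1 (Ψ.2.1 j).mapsTo := by
    intro j
    have : (fun Ψ : {Ψ : V →L[ℂ] V // IsClutch ρ F Ψ} => fiberMap Ψ.1 (Ψ.2.1 j).mapsTo) =
        fun Ψ => (P (j + 1)).comp (Ψ.1.comp (F j).subtypeL) := by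
      funext Ψ
      ext u
      exact congrArg Subtype.val (hP (j + 1) (Ψ.1 u) ((Ψ.2.1 j).mapsTo u.2)).symm
    rw [this]
    exact continuous_const.clm_comp (continuous_subtype_val.clm_comp continuous_const)
  exact (hfib 0).prodMk (hfib 3)

/-- An element translating the indices by `2` makes `ψ` depend continuously on
`(ψ(x̄₀), ψ(x̄₃))`. -/
lemma isEmbedding_evalPair [FiniteDimensional ℂ V] (hF : DirectSum.IsInternal F)
    (hρF : ∀ (g : N₂) (j : ZMod 4), (F j).map (ρ g) = F (g • j))
    {α : N₂} (h : ∀ j : ZMod 4, α • j = j + 2) :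
    Topology.IsEmbedding (evalPair ρ F) := by
  obtain ⟨P, hP, hP0⟩ := exists_proj F hF
  let A : V →L[ℂ] V := LinearMap.toContinuousLinearMap (ρ α)
  let B : V →L[ℂ] V := LinearMap.toContinuousLinearMap (ρ α⁻¹)
  let R : (↥(F (0 : ZMod 4)) →L[ℂ] ↥(F ((0 : ZMod 4) + 1))) ×
      (↥(F (3 : ZMod 4)) →L[ℂ] ↥(F ((3 : ZMod 4) + 1))) → (V →L[ℂ] V) := fun p =>
    (F ((0 : ZMod 4) + 1)).subtypeL.comp (p.1.comp (P 0)) +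
      (F ((3 : ZMod 4) + 1)).subtypeL.comp (p.2.comp (P 3))
  have hR : Continuous R :=
    (continuous_const.clm_comp (continuous_fst.clm_comp continuous_const)).add
      (continuous_const.clm_comp (continuous_snd.clm_comp continuous_const))
  have hG : Continuous fun p => R p + A.comp ((R p).comp B) :=
    hR.add (continuous_const.clm_comp (hR.clm_comp continuous_const))
  refine Topology.IsEmbedding.of_comp (continuous_evalPair hF) hG ?_
  suffices hrec : (fun p => R p + A.comp ((R p).comp B)) ∘ evalPair ρ F = Subtype.val by
    rw [hrec]; exact Topology.IsEmbedding.subtypeVal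
  funext Ψ
  -- `R` agrees with `Ψ` on the fibers `0`, `3` and vanishes on the fibers `1`, `2`.
  have hon : ∀ j : ZMod 4, j = 0 ∨ j = 3 → ∀ u ∈ F j, R (evalPair ρ F Ψ) u = Ψ.1 u := by
    rintro j (rfl | rfl) u hu
    · simp [R, evalPair, hP 0 u hu, hP0 0 3 (by decide) u hu]
      rfl
    · simp [R, evalPair, hP 3 u hu, hP0 3 0 (by decide) u hu]
      rfl
  have hoff : ∀ j : ZMod 4, j ≠ 0 → j ≠ 3 → ∀ u ∈ F j, R (evalPair ρ F Ψ) u = 0 := by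
    intro j hj0 hj3 u hu
    simp [R, hP0 j 0 hj0 u hu, hP0 j 3 hj3 u hu]
  refine ext_fibers F hF fun j u hu => ?_
  have hBu : B u ∈ F (j + 2) := by
    rw [← inv_smul_translation h j, ← hρF]
    exact Submodule.mem_map_of_mem hu
  change R (evalPair ρ F Ψ) u + A (R (evalPair ρ F Ψ) (B u)) = Ψ.1 u
  by_cases hj : j = 0 ∨ j = 3
  · rw [hon j hj u hu, hoff (j + 2) (by clear hu hBu; revert j; decide) (by clear hu hBu; revert j; decide) _ hBu,
      map_zero, add_zero]
  · rw [hoff j (fun e => hj (.inl e)) (fun e => hj (.inr e)) u hu,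
      hon (j + 2) (by clear hu hBu; revert j; decide) _ hBu, zero_add]
    exact (Ψ.2.conj_translation h j u hu).symm

end

end Clutch

/-- Assume `m = 4` and `N₂ = ⟨N₀, α₁, α₂, α₃⟩` where `N₀` is the
kernel of the action and `α₁ • x̄_j = x̄_{-j+1}`, `α₂ • x̄_j = x̄_{j+2}`,
`α₃ • x̄_j = x̄_{-j+3}`.  Then every equivariant pointwise clutching map `ψ` satisfies
`ψ(x̄₂) = α₃ ∘ ψ(x̄₀) ∘ α₃⁻¹` (i.e. `α₃ ∘ ψ(x̄₀) ∘ α₃⁻¹` inverts `ψ` on `F x̄₂`) and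
`ψ(x̄₁) = α₂ ∘ ψ(x̄₃) ∘ α₂⁻¹`; consequently the evaluation map
`𝒜 → 𝒜^{0,3}`, `ψ ↦ (ψ(x̄₀), ψ(x̄₃))`, is a homeomorphism onto its image (a topological
embedding). -/
theorem statement16
    {N₂ : Type*} [Group N₂] [MulAction N₂ (ZMod 4)]
    {V : Type*} [NormedAddCommGroup V] [NormedSpace ℂ V] [FiniteDimensional ℂ V]
    (ρ : Representation ℂ N₂ V) (F : ZMod 4 → Submodule ℂ V)
    (hF : DirectSum.IsInternal F)
    (hρF : ∀ (g : N₂) (j : ZMod 4), (F j).map (ρ g) = F (g • j))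
    (α₁ α₂ α₃ : N₂)
    (h₁ : ∀ j : ZMod 4, α₁ • j = -j + 1)
    (h₂ : ∀ j : ZMod 4, α₂ • j = j + 2)
    (h₃ : ∀ j : ZMod 4, α₃ • j = -j + 3)
    (hgen : Subgroup.closure
      (((MulAction.toPermHom N₂ (ZMod 4)).ker : Subgroup N₂) ∪ {α₁, α₂, α₃} : Set N₂) = ⊤) :
    (∀ Ψ : V →L[ℂ] V, IsClutch ρ F Ψ →
      (∀ u ∈ F (2 : ZMod 4), ρ α₃ (Ψ (ρ α₃⁻¹ (Ψ u))) = u) ∧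
      (∀ u ∈ F (1 : ZMod 4), Ψ u = ρ α₂ (Ψ (ρ α₂⁻¹ u)))) ∧
    Topology.IsEmbedding (Clutch.evalPair ρ F) := by
  exact ⟨fun _ hΨ => ⟨hΨ.conj_reflection h₃ 2, hΨ.conj_translation h₂ 1⟩,
    Clutch.isEmbedding_evalPair hF hρF h₂⟩
end
end

section
/- Let N₀ be a normal subgroup of a group N₂ with N₂/N₀ cyclic of order m, let U be a finite-dimensional irreducible complex N₀-representation whose character is fixed by N₂ (i.e. χ_U(g^{-1}ng) = χ_U(n) for all g ∈ N₂ and n ∈ N₀), and let Ū be an N₂-extension of U, i.e. a finite-dimensional complex N₂-representation with res^{N₂}_{N₀} Ū ≅ U. If W is a finite-dimensional complex N₂-representation such that res^{N₂}_{N₀} W is U-isotypical (isomorphic to a direct sum of copies of U), then W is isomorphic as an N₂-representation to a direct sum of representations of the form Ū ⊗ Ω(l) with l ∈ ℤ/m. -/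
/-! The multiplicity space of `Ū` in `W` is `H = Hom_{N₀}(Ū, W)`.  It is the space of
`N₀`-invariants in the `N₂`-representation `Hom(Ū, W)`, so it is stable under `N₂`, which acts
on it through the cyclic group `N₂/N₀`.  As `a₀ᵐ ∈ N₀`, the generator `a₀` acts on `H` with
`m`-th power `1`, hence diagonalizably, and each eigenvector `φ` satisfies
`σ(g) φ τ̄(g)⁻¹ = c(g) φ` for a character `c` of the form `Ω(l)`: it is an `N₂`-equivariant map
`Ū ⊗ Ω(l) → W` (`invariants_le_span_eigenvectors`).

Choose a basis `φ₁, …, φₖ` of `H` made of such eigenvectors and consider `e = ∑ φᵢ : Ūᵏ → W`.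
By Schur's lemma the `l` inclusions of the copies of `U` in `W ≅ Uˡ` span `H`.  Therefore the
image of `e` contains all these copies, so `e` is onto; and `k = dim H ≤ l`, so
`dim Ūᵏ ≤ dim W` and `e` is an isomorphism. -/

noncomputable section

/-- Schur's lemma over `ℂ`, for a representation whose irreducibility is expressed through
invariant subspaces. -/
theorem schur_scalar {G : Type*} [Group G] {U : Type*} [AddCommGroup U] [Module ℂ U]
    [FiniteDimensional ℂ U] [Nontrivial U] (τ : Representation ℂ G U)
    (hUirr : ∀ p : Submodule ℂ U, (∀ n : G, p.map (τ n) ≤ p) → p = ⊥ ∨ p = ⊤)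
    (f : U →ₗ[ℂ] U) (hf : ∀ n u, f (τ n u) = τ n (f u)) :
    ∃ z : ℂ, ∀ u, f u = z • u := by
  obtain ⟨z, hz⟩ := Module.End.exists_eigenvalue f
  refine ⟨z, fun u => ?_⟩
  have h := hUirr (Module.End.eigenspace f z) (by
    rintro n _ ⟨u, hu, rfl⟩
    have hu' : f u = z • u := Module.End.mem_eigenspace_iff.1 hu
    rw [Module.End.mem_eigenspace_iff, hf, hu', map_smul])
  rcases h with h | h
  · exact absurd h hz
  · exact Module.End.mem_eigenspace_iff.1 (h ▸ Submodule.mem_top)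

/-- If `v ≠ 0` is fixed by `N₀` and is an eigenvector of `a₀`, then the line through `v` is
`N₂`-stable, and `N₂` acts on it by one of the characters `Ω(l)`. -/
theorem exists_character {G : Type*} [Group G] (N : Subgroup G) [N.Normal]
    {m : ℕ} (hm : 0 < m) (hcard : Nat.card (G ⧸ N) = m)
    (a : G) (hgen : Subgroup.zpowers (QuotientGroup.mk a : G ⧸ N) = ⊤)
    {V : Type*} [AddCommGroup V] [Module ℂ V] (ρ : Representation ℂ G V)
    {v : V} (hv : v ≠ 0) (hN : ∀ n ∈ N, ρ n v = v) {z : ℂ} (hz : ρ a v = z • v) :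
    ∃ c : G →* ℂ, (∀ h ∈ N, c h = 1) ∧
      (∃ l : ZMod m, c a = Complex.exp (2 * Real.pi * Complex.I * (l.val : ℂ) / (m : ℂ))) ∧
      ∀ g, ρ g v = c g • v := by
  have hinj : ∀ x y : ℂ, x • v = y • v → x = y := fun x y h => smul_left_injective ℂ hv h
  have hpow : ∀ k : ℕ, ρ (a ^ k) v = z ^ k • v := by
    intro k
    induction k with
    | zero => simp
    | succ k ih => rw [pow_succ, map_mul, Module.End.mul_apply, hz, map_smul, ih, smul_smul,
        pow_succ, mul_comm]
  have hfin : Finite (G ⧸ N) := Nat.finite_of_card_ne_zero (by omega)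
  have hex : ∀ g, ∃ x : ℂ, ρ g v = x • v := by
    intro g
    have hg : (QuotientGroup.mk g : G ⧸ N) ∈ Subgroup.zpowers (QuotientGroup.mk a : G ⧸ N) :=
      hgen ▸ Subgroup.mem_top _
    rw [← mem_powers_iff_mem_zpowers] at hg
    obtain ⟨k, hk⟩ := hg
    have hk' : (QuotientGroup.mk (a ^ k) : G ⧸ N) = QuotientGroup.mk g := hk
    have hmem := QuotientGroup.eq.1 hk'
    refine ⟨z ^ k, ?_⟩
    have : g = a ^ k * ((a ^ k)⁻¹ * g) := by group
    rw [this, map_mul, Module.End.mul_apply, hN _ hmem, hpow]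
  choose c hc using hex
  have hzm : z ^ m = 1 := by
    apply hinj
    rw [← hpow, one_smul]
    apply hN
    rw [← QuotientGroup.eq_one_iff, QuotientGroup.mk_pow, ← hcard]
    exact pow_card_eq_one'
  refine ⟨⟨⟨c, ?_⟩, ?_⟩, ?_, ?_, hc⟩
  · apply hinj; rw [← hc]; simp
  · intro g h
    apply hinj
    change c (g * h) • v = (c g * c h) • v
    rw [← hc, map_mul, Module.End.mul_apply, hc h, map_smul, hc g, smul_smul, mul_comm]
  · intro h hh
    apply hinj
    change c h • v = _
    rw [← hc, hN h hh, one_smul]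
  · have : NeZero m := ⟨hm.ne'⟩
    obtain ⟨i, hi, h⟩ := (Complex.isPrimitiveRoot_exp m hm.ne').eq_pow_of_pow_eq_one hzm
    refine ⟨(i : ZMod m), ?_⟩
    change c a = _
    rw [ZMod.val_natCast_of_lt hi, hinj (c a) z (by rw [← hc, hz]), ← h, ← Complex.exp_nat_mul]
    congr 1
    ring

/-- `v` is a nonzero vector on whose line `G` acts through the quotient `G/N` by one of the
characters `Ω(l)`, where `Ω(l)` is encoded as a homomorphism `c : G →* ℂ`. -/
def IsOmegaEigenvector {G : Type*} [Group G] (N : Subgroup G) (m : ℕ) (a : G)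
    {V : Type*} [AddCommGroup V] [Module ℂ V] (ρ : Representation ℂ G V) (v : V) : Prop :=
  v ≠ 0 ∧ ∃ c : G →* ℂ, (∀ h ∈ N, c h = 1) ∧
      (∃ l : ZMod m, c a = Complex.exp (2 * Real.pi * Complex.I * (l.val : ℂ) / (m : ℂ))) ∧
      ∀ g, ρ g v = c g • v

/-- The `N`-fixed vectors are spanned by eigenvectors for the characters `Ω(l)`: on the space of
`N`-fixed vectors the operator of `a` satisfies the squarefree equation `Xᵐ - 1 = 0`, so it is
diagonalizable. -/
theorem invariants_le_span_eigenvectors {G : Type*} [Group G] (N : Subgroup G) [N.Normal]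
    {m : ℕ} (hm : 0 < m) (hcard : Nat.card (G ⧸ N) = m)
    (a : G) (hgen : Subgroup.zpowers (QuotientGroup.mk a : G ⧸ N) = ⊤)
    {V : Type*} [AddCommGroup V] [Module ℂ V] [FiniteDimensional ℂ V]
    (ρ : Representation ℂ G V) {v : V} (hv : ∀ n ∈ N, ρ n v = v) :
    v ∈ Submodule.span ℂ {w | IsOmegaEigenvector N m a ρ w} := by
  let H : Submodule ℂ V :=
    { carrier := {w | ∀ n ∈ N, ρ n w = w}
      add_mem' := fun hx hy n hn => by rw [map_add, hx n hn, hy n hn]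
      zero_mem' := fun n _ => map_zero _
      smul_mem' := fun r x hx n hn => by rw [map_smul, hx n hn] }
  have hH : ∀ w ∈ H, ρ a w ∈ H := by
    intro w hw n hn
    have hn' : a⁻¹ * n * a ∈ N := by
      simpa using (inferInstance : N.Normal).conj_mem n hn a⁻¹
    rw [← Module.End.mul_apply, ← map_mul, show n * a = a * (a⁻¹ * n * a) by group, map_mul,
      Module.End.mul_apply, hw _ hn']
  let T : Module.End ℂ H := (ρ a).restrict hH
  have hTpow : ∀ (k : ℕ) (w : H), ((T ^ k) w : V) = ρ (a ^ k) w := by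
    intro k
    induction k with
    | zero => simp
    | succ k ih =>
      intro w
      rw [pow_succ, Module.End.mul_apply, ih, pow_succ, map_mul, Module.End.mul_apply]
      rfl
  have ham : a ^ m ∈ N := by
    rw [← QuotientGroup.eq_one_iff, QuotientGroup.mk_pow, ← hcard]
    exact pow_card_eq_one'
  have hTm : T ^ m = 1 := by
    ext w
    rw [hTpow]
    exact w.2 _ ham
  have hss : T.IsSemisimple := by
    refine Module.End.isSemisimple_of_squarefree_aeval_eq_zero
      (p := (Polynomial.X ^ m - 1 : Polynomial ℂ)) ?_ (by simp [hTm])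
    exact (Polynomial.X_pow_sub_one_separable_iff.2 (by exact_mod_cast hm.ne')).squarefree
  have htop := hss.iSup_eigenspace_eq_top
  have hle : (⨆ μ : ℂ, T.eigenspace μ) ≤
      (Submodule.span ℂ {w | IsOmegaEigenvector N m a ρ w}).comap H.subtype := by
    refine iSup_le fun μ w hw => ?_
    by_cases h0 : w = 0
    · rw [h0]; exact Submodule.zero_mem _
    have hμ : ρ a (w : V) = μ • (w : V) :=
      congrArg Subtype.val (Module.End.mem_eigenspace_iff.1 hw)
    have h0' : (w : V) ≠ 0 := by simpa using h0
    exact Submodule.subset_span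
      ⟨h0', exists_character N hm hcard a hgen ρ h0' w.2 hμ⟩
  rw [htop] at hle
  exact hle (Submodule.mem_top : (⟨v, hv⟩ : H) ∈ ⊤)

/-- Let `N₀ ◁ N₂` with `N₂/N₀` cyclic of order `m` generated by the
image of `a₀`, let `U` be a finite-dimensional irreducible complex `N₀`-representation
whose character is fixed by conjugation by `N₂`, and let `Ū` be an `N₂`-extension of `U`.
If `W` is a finite-dimensional complex `N₂`-representation whose restriction to `N₀` is
`U`-isotypical, then `W` is isomorphic as an `N₂`-representation to a direct sum of
representations `Ū ⊗ Ω(l)`, `l ∈ ℤ/m`. -/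
theorem statement17
    {N₂ : Type*} [Group N₂] (N₀ : Subgroup N₂) [N₀.Normal]
    {m : ℕ} (hm : 0 < m) (hcard : Nat.card (N₂ ⧸ N₀) = m)
    (a₀ : N₂) (hgen : Subgroup.zpowers (QuotientGroup.mk a₀ : N₂ ⧸ N₀) = ⊤)
    {U : Type*} [AddCommGroup U] [Module ℂ U] [FiniteDimensional ℂ U]
    (τ : Representation ℂ (↥N₀) U)
    (hUnontriv : Nontrivial U)
    (hUirr : ∀ p : Submodule ℂ U, (∀ n : ↥N₀, p.map (τ n) ≤ p) → p = ⊥ ∨ p = ⊤)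
    -- the character of `U` is fixed by `N₂`: `χ_U(g⁻¹ n g) = χ_U(n)`
    (hfix : ∀ (g : N₂) (n n' : ↥N₀), (n' : N₂) = g⁻¹ * n * g →
      LinearMap.trace ℂ U (τ n') = LinearMap.trace ℂ U (τ n))
    -- `Ū` is an `N₂`-extension of `U`
    {Ubar : Type*} [AddCommGroup Ubar] [Module ℂ Ubar] [FiniteDimensional ℂ Ubar]
    (τbar : Representation ℂ N₂ Ubar)
    (hext : ∃ e : U ≃ₗ[ℂ] Ubar, ∀ (n : ↥N₀) (u : U), e (τ n u) = τbar (n : N₂) (e u))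
    -- `W` is an `N₂`-representation with `U`-isotypical restriction to `N₀`
    {W : Type*} [AddCommGroup W] [Module ℂ W] [FiniteDimensional ℂ W]
    (σ : Representation ℂ N₂ W)
    (hisot : ∃ (l : ℕ) (e : (Fin l → U) ≃ₗ[ℂ] W),
      ∀ (n : ↥N₀) (f : Fin l → U), e (fun i => τ n (f i)) = σ (n : N₂) (e f)) :
    -- conclusion: `W ≅ ⊕_i (Ū ⊗ Ω(l_i))` as `N₂`-representations
    ∃ (k : ℕ) (c : Fin k → (N₂ →* ℂ)),
      (∀ i, ∀ h ∈ N₀, c i h = 1) ∧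
      (∀ i, ∃ l : ZMod m,
        c i a₀ = Complex.exp (2 * Real.pi * Complex.I * (l.val : ℂ) / (m : ℂ))) ∧
      ∃ e : (Fin k → Ubar) ≃ₗ[ℂ] W,
        ∀ (g : N₂) (f : Fin k → Ubar),
          σ g (e f) = e (fun i => c i g • τbar g (f i)) := by
  obtain ⟨eU, heU⟩ := hext
  obtain ⟨l, E, hE⟩ := hisot
  let ρ : Representation ℂ N₂ (Ubar →ₗ[ℂ] W) := Representation.linHom τbar σ
  -- the inclusions of the copies of `Ū` in `W`, spanning `Hom_{N₀}(Ū, W)` by Schur's lemma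
  let ι : Fin l → (Ubar →ₗ[ℂ] W) := fun j =>
    E.toLinearMap ∘ₗ LinearMap.single ℂ (fun _ : Fin l => U) j ∘ₗ eU.symm.toLinearMap
  have heU' : ∀ (n : ↥N₀) (u : Ubar), eU.symm (τbar (n : N₂) u) = τ n (eU.symm u) := by
    intro n u
    rw [LinearEquiv.symm_apply_eq, heU, LinearEquiv.apply_symm_apply]
  have hE' : ∀ (n : ↥N₀) (w : W), E.symm (σ (n : N₂) w) = fun i => τ n (E.symm w i) := by
    intro n w
    rw [LinearEquiv.symm_apply_eq, hE, LinearEquiv.apply_symm_apply]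
  -- invariance under `N₀` in `Hom(Ū, W)` means commuting with the action of `N₀`
  have hcomm : ∀ φ : Ubar →ₗ[ℂ] W, (∀ n ∈ N₀, ρ n φ = φ) →
      ∀ n ∈ N₀, ∀ u, φ (τbar n u) = σ n (φ u) := by
    intro φ hφ n hn u
    have := LinearMap.congr_fun (hφ n hn) (τbar n u)
    rw [← this]
    simp [ρ]
  have hιinv : ∀ j, ∀ n ∈ N₀, ρ n (ι j) = ι j := by
    intro j n hn
    ext u
    change σ n (E (Pi.single j (eU.symm (τbar n⁻¹ u)))) = E (Pi.single j (eU.symm u))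
    have h1 := hE ⟨n, hn⟩ (Pi.single j (eU.symm (τbar n⁻¹ u)))
    rw [← h1]
    congr 1
    ext i
    by_cases h : i = j
    · subst h
      simp [← heU']
    · simp [h]
  have hspan : ∀ φ : Ubar →ₗ[ℂ] W, (∀ n ∈ N₀, ρ n φ = φ) →
      φ ∈ Submodule.span ℂ (Set.range ι) := by
    intro φ hφ
    have hz : ∀ j, ∃ z : ℂ, ∀ u, E.symm (φ (eU u)) j = z • u := by
      intro j
      refine schur_scalar τ hUirr
        (LinearMap.proj j ∘ₗ E.symm.toLinearMap ∘ₗ φ ∘ₗ eU.toLinearMap) ?_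
      intro n u
      change E.symm (φ (eU (τ n u))) j = τ n (E.symm (φ (eU u)) j)
      rw [heU, hcomm φ hφ n n.2, hE']
    choose z hz using hz
    have : φ = ∑ j, z j • ι j := by
      ext u
      apply E.symm.injective
      ext i
      have := hz i (eU.symm u)
      rw [LinearEquiv.apply_symm_apply] at this
      rw [this]
      simp [ι, Finset.sum_apply, Pi.single_apply]
    rw [this]
    exact Submodule.sum_mem _ fun j _ =>
      Submodule.smul_mem _ _ (Submodule.subset_span ⟨j, rfl⟩)
  -- a basis of `Hom_{N₀}(Ū, W)` consisting of eigenvectors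
  obtain ⟨b, hbS, hbspan, hbli⟩ :=
    exists_linearIndependent ℂ {φ | IsOmegaEigenvector N₀ m a₀ ρ φ}
  have hbfin : Finite b := hbli.finite
  have hbfix : ∀ φ ∈ b, ∀ n ∈ N₀, ρ n φ = φ := by
    intro φ hφ n hn
    obtain ⟨-, c, hc, -, h⟩ := hbS hφ
    rw [h, hc n hn, one_smul]
  have hιb : ∀ j, ι j ∈ Submodule.span ℂ b := by
    intro j
    rw [hbspan]
    exact invariants_le_span_eigenvectors N₀ hm hcard a₀ hgen ρ (hιinv j)
  obtain ⟨k, ⟨en⟩⟩ : ∃ k, Nonempty (Fin k ≃ b) := ⟨Nat.card b, ⟨(Finite.equivFin b).symm⟩⟩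
  have hkl : k ≤ l := by
    have : Fintype b := Fintype.ofFinite b
    have hk : k = Module.finrank ℂ (Submodule.span ℂ b) := by
      rw [finrank_span_set_eq_card hbli, Set.toFinset_card, ← Fintype.card_congr en,
        Fintype.card_fin]
    rw [hk]
    calc Module.finrank ℂ (Submodule.span ℂ b)
        ≤ Module.finrank ℂ (Submodule.span ℂ (Set.range ι)) :=
          Submodule.finrank_mono (Submodule.span_le.2 fun φ hφ => hspan φ (hbfix φ hφ))
      _ ≤ l := (finrank_range_le_card ι).trans (by simp)
  choose c hc1 hc2 hc3 using fun i => (hbS (en i).2).2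
  let F : (Fin k → Ubar) →ₗ[ℂ] W :=
    ∑ i, (en i : Ubar →ₗ[ℂ] W) ∘ₗ LinearMap.proj i
  have hF : ∀ f, F f = ∑ i, (en i : Ubar →ₗ[ℂ] W) (f i) := by
    intro f
    simp [F]
  have hbrange : ∀ φ ∈ Submodule.span ℂ b, ∀ u, φ u ∈ LinearMap.range F := by
    intro φ hφ u
    induction hφ using Submodule.span_induction with
    | mem φ h =>
      refine ⟨Pi.single (en.symm ⟨φ, h⟩) u, ?_⟩
      rw [hF, Finset.sum_eq_single (en.symm ⟨φ, h⟩)]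
      · simp
      · intro i _ hi
        simp [hi]
      · simp
    | zero => simp
    | add x y _ _ hx hy => exact Submodule.add_mem _ hx hy
    | smul r x _ hx => exact Submodule.smul_mem _ r hx
  have hsurj : Function.Surjective F := by
    intro w
    have hw : w = ∑ j, ι j (eU (E.symm w j)) := by
      apply E.symm.injective
      ext i
      simp [ι, Finset.sum_apply, Pi.single_apply]
    rw [← LinearMap.mem_range, hw]
    exact Submodule.sum_mem _ fun j _ => hbrange _ (hιb j) _
  have hdim : Module.finrank ℂ (Fin k → Ubar) = Module.finrank ℂ W := by
    refine le_antisymm ?_ (LinearMap.finrank_le_finrank_of_surjective hsurj)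
    rw [← E.finrank_eq, Module.finrank_pi_fintype, Module.finrank_pi_fintype, eU.finrank_eq]
    simpa using Nat.mul_le_mul_right _ hkl
  have hbij : Function.Bijective F :=
    ⟨(LinearMap.injective_iff_surjective_of_finrank_eq_finrank hdim).2 hsurj, hsurj⟩
  refine ⟨k, c, hc1, hc2, LinearEquiv.ofBijective F hbij, ?_⟩
  intro g f
  rw [LinearEquiv.ofBijective_apply, LinearEquiv.ofBijective_apply, hF, hF, map_sum]
  refine Finset.sum_congr rfl fun i _ => ?_
  have := LinearMap.congr_fun (hc3 i g) (τbar g (f i))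
  rw [map_smul, ← LinearMap.smul_apply, ← this]
  simp [ρ]
end
end
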